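/- Poincaré–Bendixson theorem for holomorphic flows: Let Ω ⊆ ℂ be open and simply connected, F holomorphic on Ω with F ≢ 0, K ⊆ Ω compact, and γ : [0,∞) → ℂ a solution of ẋ = F(x) with γ(t) ∈ K for all t ≥ 0. Then either there exists T > 0 with γ(t + T) = γ(t) for all t ≥ 0 (the orbit is periodic), or there exists a ∈ Ω with F(a) = 0 and γ(t) → a as t → ∞ (the positive limit set consists of exactly one equilibrium). -/

import Mathlib

open Set Filter Topology

/-- A solution of `ẋ = F(x)` on the set `s ⊆ ℝ`, staying in `Ω`. -/
def IsSolOn (F : ℂ → ℂ) (Ω : Set ℂ) (s : Set ℝ) (γ : ℝ → ℂ) : Prop :=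
  ∀ t ∈ s, γ t ∈ Ω ∧ HasDerivWithinAt γ (F (γ t)) s t

/-!
In a flow-box coordinate the form `dz / F` becomes `dτ`. If an injective orbit crosses a transversal
at two consecutive times `t₀ < t₁`, at heights `y₀` and `y₁`, then closing up the orbit by a short
slanted segment gives a simple loop `L` with `∮_L dz / F = (t₁ - t₀) + i (y₀ - y₁)`. The winding
number of a simple loop takes at most one nonzero value, so by the homological form of Cauchy's
theorem the periods of `1 / F` along all such loops lie in finitely many cyclic groups `ℤσ`. Hence
`|y₀ - y₁|` is either zero or bounded below, and on a short transversal `y₀ = y₁`: the orbit returns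
to the same point, contradicting injectivity. A nonperiodic orbit therefore accumulates only at
zeros of `F`; these are isolated, so it converges to one of them.
-/

open scoped Interval

/-- A closed set that looks, near `p`, like a line in the plane: its complement is locally the union
of two connected sides, both of which accumulate at every point of `S` close to `p`. The sides are
allowed to be empty or to overlap, since only their connectedness is needed to count the components
of the complement. -/
def IsTwoSidedAt {X : Type*} [TopologicalSpace X] (S : Set X) (p : X) : Prop :=
  ∃ A B : Set X, IsPreconnected A ∧ IsPreconnected B ∧ A ⊆ Sᶜ ∧ B ⊆ Sᶜ ∧ A ∪ B ∪ S ∈ 𝓝 p ∧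
    ∀ᶠ p' in 𝓝 p, p' ∈ S → p' ∈ closure A ∧ p' ∈ closure B

section TwoSided

variable {X α : Type*} [TopologicalSpace X] [TopologicalSpace α] [DiscreteTopology α]
  {S : Set X} {f : X → α}

lemma IsTwoSidedAt.eventually_mem_closure_fiber {p : X} (hp : IsTwoSidedAt S p)
    (hf : ContinuousOn f Sᶜ) {k : α} (hk : p ∈ closure (Sᶜ ∩ f ⁻¹' {k})) :
    ∀ᶠ p' in 𝓝 p, p' ∈ S → p' ∈ closure (Sᶜ ∩ f ⁻¹' {k}) := by
  obtain ⟨A, B, hA, hB, hAS, hBS, hnhds, hcl⟩ := hp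
  have side_subset : ∀ {C : Set X}, IsPreconnected C → C ⊆ Sᶜ → ∀ y ∈ C, f y = k →
      C ⊆ Sᶜ ∩ f ⁻¹' {k} := fun hC hCS y hy hyk x hx ↦
    ⟨hCS hx, (hC.constant (hf.mono hCS) hx hy).trans hyk⟩
  obtain ⟨y, hy, hyS, hyk⟩ := mem_closure_iff_nhds.1 hk _ hnhds
  rcases hy with (hy | hy) | hy
  · exact hcl.mono fun p' h hp' ↦ closure_mono (side_subset hA hAS y hy hyk) (h hp').1
  · exact hcl.mono fun p' h hp' ↦ closure_mono (side_subset hB hBS y hy hyk) (h hp').2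
  · exact absurd hy hyS

lemma subset_closure_fiber_of_isTwoSidedAt [PreconnectedSpace X] (hS : IsClosed S)
    (hne : S.Nonempty) (hconn : IsPreconnected S) (hloc : ∀ p ∈ S, IsTwoSidedAt S p)
    (hf : ContinuousOn f Sᶜ) {z : X} (hz : z ∉ S) : S ⊆ closure (Sᶜ ∩ f ⁻¹' {f z}) := by
  set L : Set X := Sᶜ ∩ f ⁻¹' {f z}
  have hL_open : IsOpen L := hf.isOpen_inter_preimage hS.isOpen_compl (isOpen_discrete _)
  have hmeet : (S ∩ closure L).Nonempty := by
    by_contra hempty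
    have hL_closed : IsClosed L := by
      refine isClosed_of_closure_subset fun x hx ↦ ?_
      have hxS : x ∈ Sᶜ := fun h ↦ hempty ⟨x, h, hx⟩
      obtain ⟨y, ⟨-, hyx⟩, -, hyz⟩ := mem_closure_iff_nhds.1 hx _
        (inter_mem (hS.isOpen_compl.mem_nhds hxS) ((hf.continuousAt
          (hS.isOpen_compl.mem_nhds hxS)).preimage_mem_nhds ((isOpen_discrete {f x}).mem_nhds rfl)))
      exact ⟨hxS, (Eq.symm hyx).trans hyz⟩
    obtain ⟨p, hp⟩ := hne
    have hL : L = univ := IsClopen.eq_univ ⟨hL_closed, hL_open⟩ ⟨z, hz, rfl⟩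
    exact (hL ▸ mem_univ p : p ∈ L).1 hp
  set u : Set X := {p | ∀ᶠ p' in 𝓝 p, p' ∈ S → p' ∈ closure L}
  have hSu : S ∩ closure L ⊆ u := fun p hp ↦
    (hloc p hp.1).eventually_mem_closure_fiber hf hp.2
  have hmem : ∀ p ∈ S ∩ u, p ∈ closure L := fun p hp ↦ hp.2.self_of_nhds hp.1
  have hcases := isPreconnected_iff_subset_of_disjoint.1 hconn u (closure L)ᶜ
    isOpen_setOfPred_eventually_nhds isClosed_closure.isOpen_compl
    (fun p hp ↦ (em (p ∈ closure L)).imp (fun h ↦ hSu ⟨hp, h⟩) id)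
    (eq_empty_of_forall_notMem fun p hp ↦ hp.2.2 (hmem p ⟨hp.1, hp.2.1⟩))
  rcases hcases with h | h
  · exact fun p hp ↦ hmem p ⟨hp, h hp⟩
  · obtain ⟨p, hpS, hpL⟩ := hmeet
    exact absurd hpL (h hpS)

theorem exists_forall_eq_or_eq_of_isTwoSidedAt [PreconnectedSpace X] (hS : IsClosed S)
    (hne : S.Nonempty) (hconn : IsPreconnected S) (hloc : ∀ p ∈ S, IsTwoSidedAt S p)
    (hf : ContinuousOn f Sᶜ) : ∃ k l : α, ∀ z ∉ S, f z = k ∨ f z = l := by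
  obtain ⟨p, hp⟩ := hne
  obtain ⟨A, B, hA, hB, hAS, hBS, hnhds, -⟩ := hloc p hp
  have exists_const : ∀ {C : Set X}, IsPreconnected C → C ⊆ Sᶜ → ∃ k, ∀ x ∈ C, f x = k := by
    rintro C hC hCS
    rcases C.eq_empty_or_nonempty with rfl | ⟨x₀, hx₀⟩
    · exact ⟨f p, by simp⟩
    · exact ⟨f x₀, fun x hx ↦ hC.constant (hf.mono hCS) hx hx₀⟩
  obtain ⟨k, hk⟩ := exists_const hA hAS
  obtain ⟨l, hl⟩ := exists_const hB hBS
  refine ⟨k, l, fun z hz ↦ ?_⟩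
  have hpz := subset_closure_fiber_of_isTwoSidedAt hS ⟨p, hp⟩ hconn hloc hf hz hp
  obtain ⟨y, (hy | hy) | hy, hyS, hyz⟩ := mem_closure_iff_nhds.1 hpz _ hnhds
  · exact .inl (hyz.symm.trans (hk y hy))
  · exact .inr (hyz.symm.trans (hl y hy))
  · exact absurd hy hyS

end TwoSided

lemma continuousOn_deriv_of_continuousOn_uncurry {X : Type*} [TopologicalSpace X] {S : Set X}
    {U : Set ℂ} (hU : IsOpen U) {Φ : X → ℂ → ℂ} (hc : ContinuousOn (Function.uncurry Φ) (S ×ˢ U))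
    (hd : ∀ s ∈ S, DifferentiableOn ℂ (Φ s) U) {z : ℂ} (hz : z ∈ U) :
    ContinuousOn (fun s ↦ deriv (Φ s) z) S := by
  intro s hs
  have hlim : TendstoLocallyUniformlyOn Φ (Φ s) (𝓝[S] s) U := by
    refine (tendstoLocallyUniformlyOn_iff_forall_isCompact hU).2 fun K hKU hK u hu ↦ ?_
    obtain ⟨v, hv, hvu⟩ := hK.mem_uniformity_of_prod
      (hc.mono (prod_mono Subset.rfl hKU)) hs (symm_le_uniformity hu)
    exact mem_of_superset hv hvu
  exact (hlim.deriv (eventually_mem_nhdsWithin.mono hd) hU).tendsto_at hz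

lemma dslope_comm {𝕜 E : Type*} [NontriviallyNormedField 𝕜] [NormedAddCommGroup E]
    [NormedSpace 𝕜 E] (f : 𝕜 → E) (a b : 𝕜) : dslope f a b = dslope f b a := by
  rcases eq_or_ne b a with rfl | h
  · rfl
  · rw [dslope_of_ne _ h, dslope_of_ne _ h.symm, slope_comm]

lemma continuousAt_uncurry_dslope_diag {𝕜 E : Type*} [NontriviallyNormedField 𝕜]
    [NormedAddCommGroup E] [NormedSpace 𝕜 E] {f : 𝕜 → E} {a : 𝕜}
    (hf : HasStrictDerivAt f (deriv f a) a) (hf' : ContinuousAt (deriv f) a) :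
    ContinuousAt (Function.uncurry (dslope f)) (a, a) := by
  refine Metric.tendsto_nhds.2 fun ε hε ↦ ?_
  have hstrict := (hasDerivAtFilter_iff_isLittleO.1 hf).def (half_pos hε)
  filter_upwards [hstrict, (hf'.comp continuousAt_fst).eventually (Metric.ball_mem_nhds _ hε)]
    with ⟨x, y⟩ hxy hx
  rcases eq_or_ne y x with rfl | hne
  · simpa [dslope_same] using hx
  · have hpos : 0 < ‖x - y‖ := norm_pos_iff.2 (sub_ne_zero.2 hne.symm)
    have hmul : ‖x - y‖ * ‖dslope f x y - deriv f a‖ ≤ ε / 2 * ‖x - y‖ := by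
      rwa [← norm_smul, smul_sub, dslope_comm, sub_smul_dslope]
    rw [Function.uncurry_apply_pair, Function.uncurry_apply_pair, dslope_same, dist_eq_norm]
    nlinarith

lemma continuousOn_uncurry_dslope {f : ℂ → ℂ} {U : Set ℂ} (hU : IsOpen U)
    (hf : DifferentiableOn ℂ f U) : ContinuousOn (Function.uncurry (dslope f)) (U ×ˢ U) := by
  rintro ⟨a, b⟩ ⟨ha, hb⟩
  refine ContinuousAt.continuousWithinAt ?_
  have hcd : ∀ {c}, c ∈ U → ContDiffAt ℂ 1 f c := fun hc ↦
    (hf.contDiffOn hU).contDiffAt (hU.mem_nhds hc)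
  rcases eq_or_ne b a with rfl | hab
  · exact continuousAt_uncurry_dslope_diag ((hcd hb).hasStrictDerivAt one_ne_zero)
      ((hf.deriv hU).continuousOn.continuousAt (hU.mem_nhds hb))
  · refine ContinuousAt.congr (f := fun p : ℂ × ℂ ↦ (f p.2 - f p.1) / (p.2 - p.1)) ?_ ?_
    · have h1 := (hcd ha).continuousAt
      have h2 := (hcd hb).continuousAt
      exact ((h2.comp continuousAt_snd).sub (h1.comp continuousAt_fst)).div (by fun_prop)
        (sub_ne_zero.2 hab)
    · filter_upwards [(isOpen_ne_fun continuous_fst continuous_snd).mem_nhds hab.symm] with p hp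
      simp [Function.uncurry_def, dslope_of_ne f (Ne.symm hp), slope_def_field]

open MeasureTheory Complex in
/-- A closed curve in the plane, continuous and continuously differentiable off a countable set of
parameters. The velocity is part of the data, so that no choice of value is needed at the
exceptional parameters. -/
structure PiecewiseC1Loop where
  a : ℝ
  b : ℝ
  a_le_b : a ≤ b
  toFun : ℝ → ℂ
  vel : ℝ → ℂ
  exc : Set ℝ
  countable_exc : exc.Countable
  continuousOn_toFun : ContinuousOn toFun (Icc a b)
  closed : toFun b = toFun a
  intervalIntegrable_vel : IntervalIntegrable vel volume a b
  hasDerivAt : ∀ t ∈ Ioo a b \ exc, HasDerivAt toFun (vel t) t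
  continuousAt_vel : ∀ t ∈ Ioo a b \ exc, ContinuousAt vel t

namespace PiecewiseC1Loop

open MeasureTheory Complex

variable (L : PiecewiseC1Loop) {f : ℂ → ℂ} {U : Set ℂ} {w : ℂ}

/-- The set of points on the loop. -/
def image : Set ℂ := L.toFun '' Icc L.a L.b

/-- The contour integral of `f` along the loop. -/
noncomputable def integral (f : ℂ → ℂ) : ℂ := ∫ t in L.a..L.b, L.vel t * f (L.toFun t)

/-- The winding number of the loop around `w`, with a junk value when `w` lies on the loop. It is
read off the Cauchy integral by rounding, which is harmless by
`PiecewiseC1Loop.integral_inv_sub`. -/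
noncomputable def windingNumber (w : ℂ) : ℤ :=
  round (L.integral (fun z ↦ (z - w)⁻¹) / (2 * Real.pi * I)).re

lemma mem_image {t : ℝ} (ht : t ∈ Icc L.a L.b) : L.toFun t ∈ L.image := mem_image_of_mem _ ht

lemma isCompact_image : IsCompact L.image :=
  isCompact_Icc.image_of_continuousOn L.continuousOn_toFun

lemma isPreconnected_image : IsPreconnected L.image :=
  isPreconnected_Icc.image _ L.continuousOn_toFun

lemma nonempty_image : L.image.Nonempty := ⟨_, L.mem_image (left_mem_Icc.2 L.a_le_b)⟩

lemma isOpen_compl_image : IsOpen L.imageᶜ := L.isCompact_image.isClosed.isOpen_compl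

lemma continuousOn_inv_sub (hw : w ∉ L.image) : ContinuousOn (fun z ↦ (z - w)⁻¹) L.image :=
  (continuousOn_id.sub continuousOn_const).inv₀ fun _ hz ↦
    sub_ne_zero.2 (ne_of_mem_of_not_mem hz hw)

lemma intervalIntegrable (hf : ContinuousOn f L.image) :
    IntervalIntegrable (fun t ↦ L.vel t * f (L.toFun t)) volume L.a L.b := by
  refine L.intervalIntegrable_vel.mul_continuousOn ?_
  rw [uIcc_of_le L.a_le_b]
  exact hf.comp L.continuousOn_toFun fun t ht ↦ L.mem_image ht

lemma integral_congr {g : ℂ → ℂ} (hfg : EqOn f g L.image) : L.integral f = L.integral g := by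
  refine intervalIntegral.integral_congr fun t ht ↦ ?_
  rw [uIcc_of_le L.a_le_b] at ht
  exact congrArg (L.vel t * ·) (hfg (L.mem_image ht))

lemma integral_sub {g : ℂ → ℂ} (hf : ContinuousOn f L.image) (hg : ContinuousOn g L.image) :
    L.integral (fun z ↦ f z - g z) = L.integral f - L.integral g := by
  simp only [integral, mul_sub]
  exact intervalIntegral.integral_sub (L.intervalIntegrable hf) (L.intervalIntegrable hg)

lemma integral_const_mul (c : ℂ) : L.integral (fun z ↦ c * f z) = c * L.integral f := by
  simp only [integral, mul_left_comm _ c, intervalIntegral.integral_const_mul]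

lemma integral_eq_zero_of_isExactOn (hUo : IsOpen U) (hU : L.image ⊆ U) (hexact : IsExactOn f U) :
    L.integral f = 0 := by
  have hf : ContinuousOn f L.image := (hexact.differentiableOn hUo).continuousOn.mono hU
  obtain ⟨G, hG⟩ := hexact
  have hGL : ∀ t ∈ Icc L.a L.b, HasDerivAt G (f (L.toFun t)) (L.toFun t) := fun t ht ↦
    hG _ (hU (L.mem_image ht))
  rw [integral, integral_eq_of_hasDerivAt_off_countable_of_le (G ∘ L.toFun) _ L.a_le_b
    L.countable_exc (fun t ht ↦ (hGL t ht).continuousAt.comp_continuousWithinAt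
      (L.continuousOn_toFun t ht)) (fun t ht ↦ ?_) (L.intervalIntegrable hf)]
  · simp [L.closed]
  · simpa using (hGL t (Ioo_subset_Icc_self ht.1)).scomp t (L.hasDerivAt t ht)

lemma differentiableOn_integral {Φ : ℂ → ℂ → ℂ} (hU : IsOpen U)
    (hc : ContinuousOn (Function.uncurry Φ) (L.image ×ˢ U))
    (hd : ∀ s ∈ L.image, DifferentiableOn ℂ (Φ s) U) :
    DifferentiableOn ℂ (fun z ↦ L.integral (Φ · z)) U := by
  intro z hz
  obtain ⟨r, hr, hrU⟩ := Metric.nhds_basis_closedBall.mem_iff.1 (hU.mem_nhds hz)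
  obtain ⟨M, hM⟩ := (L.isCompact_image.prod (isCompact_closedBall z r)).exists_bound_of_continuousOn
    (hc.mono (prod_mono Subset.rfl hrU))
  have hcont : ∀ y ∈ U, ContinuousOn (Φ · y) L.image := fun y hy ↦
    hc.comp (by fun_prop : Continuous fun s : ℂ ↦ (s, y)).continuousOn fun s hs ↦ ⟨hs, hy⟩
  have hderiv_int := intervalIntegrable_iff.1
    (L.intervalIntegrable (continuousOn_deriv_of_continuousOn_uncurry hU hc hd hz))
  have hcauchy : ∀ s ∈ L.image, ∀ y ∈ Metric.ball z (r / 2), ‖deriv (Φ s) y‖ ≤ M / (r / 2) := by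
    intro s hs y hy
    have hyr : Metric.closedBall y (r / 2) ⊆ Metric.closedBall z r :=
      Metric.closedBall_subset_closedBall' (by linarith [Metric.mem_ball.1 hy])
    exact norm_deriv_le_of_forall_mem_sphere_norm_le (half_pos hr)
      (((hd s hs).mono (hyr.trans hrU)).diffContOnCl_ball Subset.rfl)
      fun x hx ↦ hM (s, x) ⟨hs, hyr (Metric.sphere_subset_closedBall hx)⟩
  have hmem : ∀ t ∈ Ι L.a L.b, L.toFun t ∈ L.image := fun t ht ↦
    L.mem_image (Ioc_subset_Icc_self (uIoc_of_le L.a_le_b ▸ ht))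
  refine (intervalIntegral.hasDerivAt_integral_of_dominated_loc_of_deriv_le
    (F := fun y t ↦ L.vel t * Φ (L.toFun t) y) (F' := fun y t ↦ L.vel t * deriv (Φ (L.toFun t)) y)
    (bound := fun t ↦ ‖L.vel t‖ * (M / (r / 2))) (Metric.ball_mem_nhds z (half_pos hr))
    ?_ (L.intervalIntegrable (hcont z hz)) hderiv_int.aestronglyMeasurable ?_
    (L.intervalIntegrable_vel.norm.mul_const _) ?_).2.differentiableAt.differentiableWithinAt
  · filter_upwards [hU.mem_nhds hz] with y hy
    exact (intervalIntegrable_iff.1 (L.intervalIntegrable (hcont y hy))).aestronglyMeasurable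
  · refine .of_forall fun t ht y hy ↦ ?_
    rw [norm_mul]
    exact mul_le_mul_of_nonneg_left (hcauchy _ (hmem t ht) y hy) (norm_nonneg _)
  · refine .of_forall fun t ht y hy ↦ ?_
    have hyU : y ∈ U :=
      hrU (Metric.ball_subset_closedBall (Metric.ball_subset_ball (by linarith) hy))
    exact ((hd _ (hmem t ht)).differentiableAt (hU.mem_nhds hyU)).hasDerivAt.const_mul _

lemma hasDerivAt_primitive (hf : ContinuousOn f L.image) {t : ℝ} (ht : t ∈ Ioo L.a L.b \ L.exc) :
    HasDerivAt (fun x ↦ ∫ τ in L.a..x, L.vel τ * f (L.toFun τ)) (L.vel t * f (L.toFun t)) t := by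
  have hint := L.intervalIntegrable hf
  refine intervalIntegral.integral_hasDerivAt_right (hint.mono_set ?_)
    ⟨Ioc L.a L.b, Ioc_mem_nhds ht.1.1 ht.1.2, hint.1.aestronglyMeasurable⟩ ?_
  · rw [uIcc_of_le L.a_le_b, uIcc_of_le ht.1.1.le]
    exact Icc_subset_Icc_right ht.1.2.le
  · refine (L.continuousAt_vel t ht).mul ?_
    exact (hf.comp L.continuousOn_toFun fun τ hτ ↦ L.mem_image hτ).continuousAt
      (Icc_mem_nhds ht.1.1 ht.1.2)

lemma integral_inv_sub (hw : w ∉ L.image) :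
    L.integral (fun z ↦ (z - w)⁻¹) = L.windingNumber w * (2 * Real.pi * I) := by
  suffices exp (L.integral fun z ↦ (z - w)⁻¹) = 1 by
    obtain ⟨n, hn⟩ := exp_eq_one_iff.1 this
    rw [windingNumber, hn, mul_div_cancel_right₀ _ two_pi_I_ne_zero, intCast_re, round_intCast]
  have hne : ∀ t ∈ Icc L.a L.b, L.toFun t - w ≠ 0 := fun t ht ↦
    sub_ne_zero.2 (ne_of_mem_of_not_mem (L.mem_image ht) hw)
  have hint := L.intervalIntegrable (L.continuousOn_inv_sub hw)
  set P : ℝ → ℂ := fun x ↦ ∫ t in L.a..x, L.vel t * (L.toFun t - w)⁻¹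
  have hPcont : ContinuousOn P (Icc L.a L.b) := by
    simpa [uIcc_of_le L.a_le_b] using
      intervalIntegral.continuousOn_primitive_interval' hint left_mem_uIcc
  -- `exp (-P) * (σ - w)` is constant along the loop `σ`, since its derivative vanishes.
  have hconst := integral_eq_of_hasDerivAt_off_countable_of_le
    (fun t ↦ exp (-P t) * (L.toFun t - w)) (fun _ ↦ 0) L.a_le_b L.countable_exc
    (hPcont.neg.cexp.mul (L.continuousOn_toFun.sub continuousOn_const)) (fun t ht ↦ ?_) (by simp)
  · have hexp : exp (-P L.b) * (L.toFun L.a - w) = 1 * (L.toFun L.a - w) :=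
      sub_eq_zero.1 (by simpa [P, L.closed] using hconst.symm)
    have := mul_right_cancel₀ (hne _ (left_mem_Icc.2 L.a_le_b)) hexp
    rwa [exp_neg, inv_eq_one] at this
  · refine ((L.hasDerivAt_primitive (L.continuousOn_inv_sub hw) ht).neg.cexp.mul
      ((L.hasDerivAt t ht).sub_const w)).congr_deriv ?_
    have := hne t (Ioo_subset_Icc_self ht.1)
    field

lemma differentiableOn_integral_mul_inv_sub (hf : ContinuousOn f L.image) :
    DifferentiableOn ℂ (fun w ↦ L.integral fun z ↦ f z * (z - w)⁻¹) L.imageᶜ := by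
  refine L.differentiableOn_integral (Φ := fun z w ↦ f z * (z - w)⁻¹) L.isOpen_compl_image ?_ ?_
  · refine (hf.comp continuousOn_fst fun p hp ↦ hp.1).mul ?_
    exact (by fun_prop : Continuous fun p : ℂ × ℂ ↦ p.1 - p.2).continuousOn.inv₀ fun p hp ↦
      sub_ne_zero.2 (ne_of_mem_of_not_mem hp.1 hp.2)
  · exact fun s hs ↦ (DifferentiableOn.inv (by fun_prop) fun w hw ↦
      sub_ne_zero.2 (ne_of_mem_of_not_mem hs hw)).const_mul (f s)

lemma tendsto_integral_mul_inv_sub_cocompact (hf : ContinuousOn f L.image) :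
    Tendsto (fun w ↦ L.integral fun z ↦ f z * (z - w)⁻¹) (cocompact ℂ) (𝓝 0) := by
  obtain ⟨M, hM⟩ := L.isCompact_image.exists_bound_of_continuousOn hf
  obtain ⟨R, hR⟩ := L.isCompact_image.isBounded.exists_norm_le
  have hmem : ∀ t ∈ Ι L.a L.b, L.toFun t ∈ L.image := fun t ht ↦
    L.mem_image (Ioc_subset_Icc_self (uIoc_of_le L.a_le_b ▸ ht))
  have hnorm := tendsto_norm_cocompact_atTop (E := ℂ)
  have : (cocompact ℂ).IsCountablyGenerated := by
    rw [← Metric.cobounded_eq_cocompact, ← comap_norm_atTop]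
    infer_instance
  rw [← intervalIntegral.integral_zero (a := L.a) (b := L.b) (μ := volume)]
  refine intervalIntegral.tendsto_integral_filter_of_dominated_convergence
    (fun t ↦ ‖L.vel t‖ * M) ?_ ?_ (L.intervalIntegrable_vel.norm.mul_const M) ?_
  · filter_upwards [L.isCompact_image.compl_mem_cocompact] with w hw
    exact (intervalIntegrable_iff.1 (L.intervalIntegrable
      (hf.mul (L.continuousOn_inv_sub hw)))).aestronglyMeasurable
  · filter_upwards [hnorm.eventually_ge_atTop (R + 1)] with w hw
    refine .of_forall fun t ht ↦ ?_
    have hdist : 1 ≤ ‖L.toFun t - w‖ := by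
      linarith [norm_sub_rev w (L.toFun t), norm_sub_norm_le w (L.toFun t), hR _ (hmem t ht)]
    have hM0 : 0 ≤ M := (norm_nonneg _).trans (hM _ (hmem t ht))
    rw [norm_mul, norm_mul, norm_inv]
    gcongr
    exact (mul_le_mul (hM _ (hmem t ht)) (inv_le_one_of_one_le₀ hdist) (by positivity) hM0).trans_eq
      (mul_one M)
  · refine .of_forall fun t _ ↦ ?_
    have hinv : Tendsto (fun w : ℂ ↦ (L.toFun t - w)⁻¹) (cocompact ℂ) (𝓝 0) := by
      rw [← Metric.cobounded_eq_cocompact]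
      exact tendsto_inv₀_cobounded.comp (tendsto_const_sub_cobounded _)
    simpa using (hinv.const_mul (f (L.toFun t))).const_mul (L.vel t)

lemma continuousOn_windingNumber : ContinuousOn L.windingNumber L.imageᶜ := by
  refine Int.isClosedEmbedding_coe_real.isInducing.continuousOn_iff.2 ?_
  have hdiff : DifferentiableOn ℂ (fun w ↦ L.integral fun z ↦ (z - w)⁻¹) L.imageᶜ := by
    simpa using L.differentiableOn_integral_mul_inv_sub (f := fun _ ↦ 1) continuousOn_const
  refine (continuous_re.comp_continuousOn
    (hdiff.continuousOn.div_const (2 * Real.pi * I))).congr fun w hw ↦ ?_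
  simp [L.integral_inv_sub hw]

lemma windingNumber_eq_of_isPreconnected {A : Set ℂ} (hA : IsPreconnected A)
    (hAL : A ⊆ L.imageᶜ) {x y : ℂ} (hx : x ∈ A) (hy : y ∈ A) :
    L.windingNumber x = L.windingNumber y :=
  hA.constant (L.continuousOn_windingNumber.mono hAL) hx hy

lemma eventually_windingNumber_eq (hw : w ∉ L.image) :
    ∀ᶠ z in 𝓝 w, z ∉ L.image ∧ L.windingNumber z = L.windingNumber w := by
  have hnhds := L.isOpen_compl_image.mem_nhds hw
  exact (eventually_mem_set.2 hnhds).and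
    ((L.continuousOn_windingNumber.continuousAt hnhds).eventually
      ((isOpen_discrete {L.windingNumber w}).mem_nhds rfl))

lemma windingNumber_eq_zero_of_notMem_ball {c : ℂ} {R : ℝ} (hR : L.image ⊆ Metric.ball c R)
    (hw : w ∉ Metric.ball c R) : L.windingNumber w = 0 := by
  have hd : DifferentiableOn ℂ (fun z ↦ (z - w)⁻¹) (Metric.ball c R) :=
    DifferentiableOn.inv (by fun_prop) fun z hz ↦ sub_ne_zero.2 (ne_of_mem_of_not_mem hz hw)
  have hzero := L.integral_eq_zero_of_isExactOn Metric.isOpen_ball hR hd.isExactOn_ball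
  simp [windingNumber, hzero]

lemma eventually_cocompact_windingNumber_eq_zero :
    ∀ᶠ w in cocompact ℂ, w ∉ L.image ∧ L.windingNumber w = 0 := by
  obtain ⟨R, hR⟩ := L.isCompact_image.isBounded.subset_ball 0
  filter_upwards [(isCompact_closedBall (0 : ℂ) R).compl_mem_cocompact] with w hw
  have hwR : w ∉ Metric.ball 0 R := fun h ↦ hw (Metric.ball_subset_closedBall h)
  exact ⟨fun h ↦ hwR (hR h), L.windingNumber_eq_zero_of_notMem_ball hR hwR⟩

lemma differentiableOn_integral_dslope (hU : IsOpen U) (hf : DifferentiableOn ℂ f U)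
    (hLU : L.image ⊆ U) : DifferentiableOn ℂ (fun w ↦ L.integral (dslope f w)) U := by
  have hcomm : (fun w ↦ L.integral (dslope f w)) = fun w ↦ L.integral (dslope f · w) :=
    funext fun w ↦ congrArg L.integral (funext (dslope_comm f w))
  rw [hcomm]
  exact L.differentiableOn_integral hU
    ((continuousOn_uncurry_dslope hU hf).mono (prod_mono hLU Subset.rfl))
    fun s hs ↦ (differentiableOn_dslope (hU.mem_nhds (hLU hs))).2 hf

lemma integral_dslope (hf : ContinuousOn f L.image) (hw : w ∉ L.image) :
    L.integral (dslope f w) = L.integral (fun z ↦ f z * (z - w)⁻¹) -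
      f w * (L.windingNumber w * (2 * Real.pi * I)) := by
  have hinv := L.continuousOn_inv_sub hw
  rw [← L.integral_inv_sub hw, ← L.integral_const_mul,
    ← L.integral_sub (hf.fun_mul hinv) (continuousOn_const.fun_mul hinv)]
  refine L.integral_congr fun z hz ↦ ?_
  rw [dslope_of_ne f (ne_of_mem_of_not_mem hz hw), slope_def_field, div_eq_mul_inv, sub_mul]

end PiecewiseC1Loop

lemma eqOn_zero_of_eventuallyEq_of_tendsto_cocompact {g h : ℂ → ℂ} {U : Set ℂ} (hU : IsOpen U)
    (hg : DifferentiableOn ℂ g U) (hh : ∀ w ∉ U, DifferentiableAt ℂ h w)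
    (hgh : ∀ w ∉ U, ∀ᶠ y in 𝓝 w, y ∈ U → g y = h y)
    (hgh_cocompact : ∀ᶠ y in cocompact ℂ, y ∈ U → g y = h y)
    (hlim : Tendsto h (cocompact ℂ) (𝓝 0)) : EqOn g 0 U := by
  classical
  have piecewise_eq : ∀ y, (y ∈ U → g y = h y) → U.piecewise g h y = h y := by
    intro y hy
    by_cases hyU : y ∈ U <;> simp [hyU, hy]
  have hdiff : Differentiable ℂ (U.piecewise g h) := by
    intro w
    by_cases hw : w ∈ U
    · refine (hg.differentiableAt (hU.mem_nhds hw)).congr_of_eventuallyEq ?_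
      filter_upwards [hU.mem_nhds hw] with y hy using piecewise_eq_of_mem _ _ _ hy
    · exact (hh w hw).congr_of_eventuallyEq ((hgh w hw).mono piecewise_eq)
  intro z hz
  rw [← piecewise_eq_of_mem U g h hz]
  exact hdiff.apply_eq_of_tendsto_cocompact z
    (hlim.congr' (hgh_cocompact.mono fun y hy ↦ (piecewise_eq y hy).symm))

section Dixon

variable {ι : Type*} {s : Finset ι} {c : ι → ℂ} {L : ι → PiecewiseC1Loop} {U : Set ℂ} {f : ℂ → ℂ}

lemma sum_integral_dslope_eq (hf : ∀ i ∈ s, ContinuousOn f (L i).image) {w : ℂ}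
    (hw : ∀ i ∈ s, w ∉ (L i).image) (hwind : ∑ i ∈ s, c i * (L i).windingNumber w = 0) :
    ∑ i ∈ s, c i * (L i).integral (dslope f w) =
      ∑ i ∈ s, c i * (L i).integral fun z ↦ f z * (z - w)⁻¹ := by
  have hsum : ∑ i ∈ s, c i * (L i).integral (dslope f w) =
      (∑ i ∈ s, c i * (L i).integral fun z ↦ f z * (z - w)⁻¹) -
        (∑ i ∈ s, c i * (L i).windingNumber w) * (f w * (2 * Real.pi * Complex.I)) := by
    rw [Finset.sum_mul, ← Finset.sum_sub_distrib]
    refine Finset.sum_congr rfl fun i hi ↦ ?_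
    rw [(L i).integral_dslope (hf i hi) (hw i hi)]
    ring
  rw [hsum, hwind, zero_mul, sub_zero]

-- The left side continues to an entire function of `z` vanishing at infinity: outside `U`, and near
-- infinity, the Cauchy transforms of the loops provide the continuation.
lemma sum_integral_dslope_eq_zero (hU : IsOpen U) (hf : DifferentiableOn ℂ f U)
    (hLU : ∀ i ∈ s, (L i).image ⊆ U) (hwind : ∀ w ∉ U, ∑ i ∈ s, c i * (L i).windingNumber w = 0)
    {z : ℂ} (hz : z ∈ U) : ∑ i ∈ s, c i * (L i).integral (dslope f z) = 0 := by
  have hfL : ∀ i ∈ s, ContinuousOn f (L i).image := fun i hi ↦ hf.continuousOn.mono (hLU i hi)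
  refine eqOn_zero_of_eventuallyEq_of_tendsto_cocompact hU
    (h := fun w ↦ ∑ i ∈ s, c i * (L i).integral fun z ↦ f z * (z - w)⁻¹)
    (DifferentiableOn.fun_sum fun i hi ↦
      ((L i).differentiableOn_integral_dslope hU hf (hLU i hi)).const_mul (c i))
    (fun w hw ↦ DifferentiableAt.fun_sum fun i hi ↦
      (((L i).differentiableOn_integral_mul_inv_sub (hfL i hi)).differentiableAt
        ((L i).isOpen_compl_image.mem_nhds fun h ↦ hw (hLU i hi h))).const_mul (c i))
    (fun w hw ↦ ?_) ?_ ?_ hz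
  · filter_upwards [(eventually_all_finset s).2 fun i hi ↦
      (L i).eventually_windingNumber_eq fun h ↦ hw (hLU i hi h)] with y hy _
    refine sum_integral_dslope_eq hfL (fun i hi ↦ (hy i hi).1) ((hwind w hw).symm.trans ?_).symm
    exact Finset.sum_congr rfl fun i hi ↦ by rw [(hy i hi).2]
  · filter_upwards [(eventually_all_finset s).2 fun i _ ↦
      (L i).eventually_cocompact_windingNumber_eq_zero] with y hy _
    exact sum_integral_dslope_eq hfL (fun i hi ↦ (hy i hi).1)
      (Finset.sum_eq_zero fun i hi ↦ by simp [(hy i hi).2])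
  · simpa using tendsto_finsetSum s fun i hi ↦
      ((L i).tendsto_integral_mul_inv_sub_cocompact (hfL i hi)).const_mul (c i)

theorem sum_integral_eq_zero_of_sum_windingNumber_eq_zero (hU : IsOpen U)
    (hf : DifferentiableOn ℂ f U) (hLU : ∀ i ∈ s, (L i).image ⊆ U)
    (hwind : ∀ w ∉ U, ∑ i ∈ s, c i * (L i).windingNumber w = 0) :
    ∑ i ∈ s, c i * (L i).integral f = 0 := by
  rcases s.eq_empty_or_nonempty with rfl | ⟨j, hj⟩
  · simp
  obtain ⟨a, ha⟩ := (L j).nonempty_image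
  have haU := hLU j hj ha
  have hslope : dslope (fun z ↦ (z - a) * f z) a = f := by
    have hda := hf.differentiableAt (hU.mem_nhds haU)
    have hderiv : deriv (fun z ↦ (z - a) * f z) a = f a := by
      simpa using (((hasDerivAt_id' a).sub_const a).fun_mul hda.hasDerivAt).deriv
    have := dslope_sub_smul f a
    simp only [smul_eq_mul] at this
    rw [this, hderiv, Function.update_eq_self]
  simpa only [hslope] using
    sum_integral_dslope_eq_zero hU (f := fun z ↦ (z - a) * f z) (by fun_prop) hLU hwind haU

end Dixon

section Periods

variable {C U : Set ℂ} {f : ℂ → ℂ}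

lemma exists_finset_windingNumber_eq (hC : IsCompact C) (hU : IsOpen U)
    (hCU : ∀ w ∈ C \ U, ∀ᶠ z in 𝓝[≠] w, z ∈ U) :
    ∃ W : Finset ℂ, ↑W ⊆ Uᶜ ∧ ∀ w ∉ U,
      (∀ L : PiecewiseC1Loop, L.image ⊆ C ∩ U → L.windingNumber w = 0) ∨
      ∃ w' ∈ W, ∀ L : PiecewiseC1Loop, L.image ⊆ C ∩ U →
        L.windingNumber w = L.windingNumber w' := by
  obtain ⟨R, hR⟩ := hC.isBounded.subset_ball 0
  have hlocal : ∀ w ∉ U, ∃ V ∈ 𝓝 w, ∀ w' ∈ V, w' ∉ U → ∀ L : PiecewiseC1Loop,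
      L.image ⊆ C ∩ U → L.windingNumber w' = L.windingNumber w := by
    intro w hw
    by_cases hwC : w ∈ C
    · refine ⟨_, eventually_nhdsWithin_iff.1 (hCU w ⟨hwC, hw⟩), fun w' hw' hw'U L _ ↦ ?_⟩
      rw [not_imp_comm.1 hw' hw'U]
    · obtain ⟨r, hr, hrC⟩ := Metric.isOpen_iff.1 hC.isClosed.isOpen_compl w hwC
      exact ⟨_, Metric.ball_mem_nhds w hr, fun w' hw' _ L hL ↦
        L.windingNumber_eq_of_isPreconnected (convex_ball w r).isPreconnected
          (fun z hz hzL ↦ hrC hz (hL hzL).1) hw' (Metric.mem_ball_self hr)⟩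
  choose! V hV_nhds hV using hlocal
  obtain ⟨W, hW, hW_cover⟩ := ((isCompact_closedBall (0 : ℂ) R).diff hU).elim_nhds_subcover V
    fun w hw ↦ hV_nhds w hw.2
  refine ⟨W, fun w hw ↦ (hW w hw).2, fun w hw ↦ ?_⟩
  by_cases hwR : w ∈ Metric.closedBall 0 R
  · obtain ⟨w', hw', hww'⟩ := mem_iUnion₂.1 (hW_cover ⟨hwR, hw⟩)
    exact .inr ⟨w', hw', hV w' (hW w' hw').2 w hww' hw⟩
  · exact .inl fun L hL ↦ L.windingNumber_eq_zero_of_notMem_ball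
      (fun z hz ↦ hR (hL hz).1) fun h ↦ hwR (Metric.ball_subset_closedBall h)

-- By `sum_integral_eq_zero_of_sum_windingNumber_eq_zero`, the functional `∮ f` on formal sums of
-- loops vanishes where finitely many winding numbers do, so it is a combination of them.
theorem exists_forall_integral_eq_sum_windingNumber_mul (hC : IsCompact C) (hU : IsOpen U)
    (hCU : ∀ w ∈ C \ U, ∀ᶠ z in 𝓝[≠] w, z ∈ U) (hf : DifferentiableOn ℂ f U) :
    ∃ (W : Finset ℂ) (ρ : W → ℂ), ↑W ⊆ Uᶜ ∧ ∀ L : PiecewiseC1Loop, L.image ⊆ C ∩ U →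
      L.integral f = ∑ w : W, ρ w * L.windingNumber w := by
  obtain ⟨W, hWU, hW⟩ := exists_finset_windingNumber_eq hC hU hCU
  let winding (w : W) : ({L : PiecewiseC1Loop // L.image ⊆ C ∩ U} →₀ ℂ) →ₗ[ℂ] ℂ :=
    Finsupp.linearCombination ℂ fun L ↦ (L.1.windingNumber w : ℂ)
  let period : ({L : PiecewiseC1Loop // L.image ⊆ C ∩ U} →₀ ℂ) →ₗ[ℂ] ℂ :=
    Finsupp.linearCombination ℂ fun L ↦ L.1.integral f
  have hker : ⨅ w, LinearMap.ker (winding w) ≤ LinearMap.ker period := by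
    intro c hc
    simp only [Submodule.mem_iInf, LinearMap.mem_ker, winding, period,
      Finsupp.linearCombination_apply, Finsupp.sum, smul_eq_mul] at hc ⊢
    refine sum_integral_eq_zero_of_sum_windingNumber_eq_zero hU hf
      (fun L _ ↦ L.2.trans inter_subset_right) fun w hw ↦ ?_
    rcases hW w hw with h0 | ⟨w', hw', hww'⟩
    · exact Finset.sum_eq_zero fun L _ ↦ by simp [h0 L.1 L.2]
    · rw [← hc ⟨w', hw'⟩]
      exact Finset.sum_congr rfl fun L _ ↦ by rw [hww' L.1 L.2]
  obtain ⟨ρ, hρ⟩ := (Submodule.mem_span_range_iff_exists_fun ℂ).1 (mem_span_of_iInf_ker_le_ker hker)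
  refine ⟨W, ρ, hWU, fun L hL ↦ ?_⟩
  simpa [winding, period, eq_comm] using LinearMap.congr_fun hρ (Finsupp.single ⟨L, hL⟩ 1)

lemma PiecewiseC1Loop.exists_windingNumber_eq_zero_or_eq (L : PiecewiseC1Loop)
    (hL : ∀ p ∈ L.image, IsTwoSidedAt L.image p) :
    ∃ m : ℤ, ∀ w ∉ L.image, L.windingNumber w = 0 ∨ L.windingNumber w = m := by
  obtain ⟨k, l, hkl⟩ := exists_forall_eq_or_eq_of_isTwoSidedAt L.isCompact_image.isClosed
    L.nonempty_image L.isPreconnected_image hL L.continuousOn_windingNumber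
  obtain ⟨z, hz, hz0⟩ := L.eventually_cocompact_windingNumber_eq_zero.exists
  rcases hkl z hz with h | h
  · exact ⟨l, fun w hw ↦ (hkl w hw).imp_left (·.trans (h.symm.trans hz0))⟩
  · exact ⟨k, fun w hw ↦ (hkl w hw).symm.imp_left (·.trans (h.symm.trans hz0))⟩

theorem exists_finite_forall_integral_eq_int_mul (hC : IsCompact C) (hU : IsOpen U)
    (hCU : ∀ w ∈ C \ U, ∀ᶠ z in 𝓝[≠] w, z ∈ U) (hf : DifferentiableOn ℂ f U) :
    ∃ P : Set ℂ, P.Finite ∧ ∀ L : PiecewiseC1Loop, L.image ⊆ C ∩ U →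
      (∀ p ∈ L.image, IsTwoSidedAt L.image p) → ∃ σ ∈ P, ∃ n : ℤ, L.integral f = n * σ := by
  classical
  obtain ⟨W, ρ, hWU, hρ⟩ := exists_forall_integral_eq_sum_windingNumber_mul hC hU hCU hf
  refine ⟨range fun S : Finset W ↦ ∑ w ∈ S, ρ w, finite_range _, fun L hL hL_two ↦ ?_⟩
  obtain ⟨m, hm⟩ := L.exists_windingNumber_eq_zero_or_eq hL_two
  have hm_eq : ∀ w : W, ρ w * L.windingNumber w =
      if L.windingNumber w = 0 then 0 else m * ρ w := by
    intro w
    split_ifs with h0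
    · simp [h0]
    · rw [(hm w fun hw ↦ hWU w.2 (hL hw).2).resolve_left h0, mul_comm]
  refine ⟨_, ⟨Finset.univ.filter fun w ↦ L.windingNumber w ≠ 0, rfl⟩, m, ?_⟩
  rw [hρ L hL, Finset.mul_sum, Finset.sum_filter]
  exact Finset.sum_congr rfl fun w _ ↦ by rw [hm_eq w, ite_not]

theorem exists_pos_forall_im_integral_eq_zero (hC : IsCompact C) (hU : IsOpen U)
    (hCU : ∀ w ∈ C \ U, ∀ᶠ z in 𝓝[≠] w, z ∈ U) (hf : DifferentiableOn ℂ f U) :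
    ∃ ε > 0, ∀ L : PiecewiseC1Loop, L.image ⊆ C ∩ U → (∀ p ∈ L.image, IsTwoSidedAt L.image p) →
      |(L.integral f).im| < ε → (L.integral f).im = 0 := by
  obtain ⟨P, hP, hPL⟩ := exists_finite_forall_integral_eq_int_mul hC hU hCU hf
  have hsmall : ∀ᶠ ε in 𝓝[>] (0 : ℝ), ∀ σ ∈ P, σ.im ≠ 0 → ε < |σ.im| := by
    refine (eventually_all_finite hP).2 fun σ _ ↦ ?_
    by_cases h0 : σ.im = 0
    · exact .of_forall fun _ h ↦ absurd h0 h
    · filter_upwards [mem_nhdsWithin_of_mem_nhds (Iio_mem_nhds (abs_pos.2 h0))] with ε hε _ using hε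
  obtain ⟨ε, hεP, hε⟩ := (hsmall.and self_mem_nhdsWithin).exists
  refine ⟨ε, hε, fun L hL hL_two hlt ↦ ?_⟩
  obtain ⟨σ, hσ, n, hn⟩ := hPL L hL hL_two
  have him : (L.integral f).im = n * σ.im := by simp [hn]
  simp only [him, abs_mul, mul_eq_zero] at hlt ⊢
  by_contra! ⟨hn0, hσ0⟩
  have h1 : (1 : ℝ) ≤ |(n : ℝ)| := by exact_mod_cast Int.one_le_abs (by exact_mod_cast hn0)
  nlinarith [hεP σ hσ hσ0, abs_nonneg σ.im]

end Periods

lemma exists_lipschitzOnWith_of_differentiableOn_of_isCompact {F : ℂ → ℂ} {Ω C : Set ℂ}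
    (hΩ : IsOpen Ω) (hF : DifferentiableOn ℂ F Ω) (hC : IsCompact C) (hCΩ : C ⊆ Ω) :
    ∃ k, LipschitzOnWith k F C := by
  refine LocallyLipschitzOn.exists_lipschitzOnWith_of_compact hC fun x hx ↦ ?_
  obtain ⟨k, t, ht, hk⟩ :=
    ((hF.contDiffOn hΩ).contDiffAt (hΩ.mem_nhds (hCΩ hx))).exists_lipschitzOnWith
  exact ⟨k, t, mem_nhdsWithin_of_mem_nhds ht, hk⟩

namespace IsSolOn

variable {F : ℂ → ℂ} {Ω : Set ℂ} {s : Set ℝ} {α β γ : ℝ → ℂ}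

lemma mem (hγ : IsSolOn F Ω s γ) {t : ℝ} (ht : t ∈ s) : γ t ∈ Ω := (hγ t ht).1

lemma hasDerivWithinAt (hγ : IsSolOn F Ω s γ) {t : ℝ} (ht : t ∈ s) :
    HasDerivWithinAt γ (F (γ t)) s t := (hγ t ht).2

lemma continuousOn (hγ : IsSolOn F Ω s γ) : ContinuousOn γ s := fun _ ht ↦
  (hγ.hasDerivWithinAt ht).continuousWithinAt

lemma mono (hγ : IsSolOn F Ω s γ) {s' : Set ℝ} (hs : s' ⊆ s) : IsSolOn F Ω s' γ := fun _ ht ↦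
  ⟨hγ.mem (hs ht), (hγ.hasDerivWithinAt (hs ht)).mono hs⟩

lemma comp_add_const (hγ : IsSolOn F Ω s γ) (c : ℝ) :
    IsSolOn F Ω ((· + c) ⁻¹' s) fun t ↦ γ (t + c) := fun t ht ↦
  ⟨hγ.mem ht, by
    simpa [Function.comp_def] using (hγ.hasDerivWithinAt ht).scomp t
      ((hasDerivWithinAt_id t _).add_const c) (mapsTo_preimage _ _)⟩

section Uniqueness

variable (hΩ : IsOpen Ω) (hF : DifferentiableOn ℂ F Ω)
include hΩ hF

lemma exists_lipschitzOnWith_image_union (hs : IsCompact s) (hα : IsSolOn F Ω s α)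
    (hβ : IsSolOn F Ω s β) : ∃ k, LipschitzOnWith k F (α '' s ∪ β '' s) :=
  exists_lipschitzOnWith_of_differentiableOn_of_isCompact hΩ hF
    ((hs.image_of_continuousOn hα.continuousOn).union (hs.image_of_continuousOn hβ.continuousOn))
    (union_subset (image_subset_iff.2 fun _ ↦ hα.mem) (image_subset_iff.2 fun _ ↦ hβ.mem))

lemma eqOn_Icc_of_eq_left {a b : ℝ} (hα : IsSolOn F Ω (Icc a b) α) (hβ : IsSolOn F Ω (Icc a b) β)
    (h : α a = β a) : EqOn α β (Icc a b) := by
  obtain ⟨k, hk⟩ := exists_lipschitzOnWith_image_union hΩ hF isCompact_Icc hα hβ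
  have right_deriv : ∀ {δ : ℝ → ℂ}, IsSolOn F Ω (Icc a b) δ →
      ∀ t ∈ Ico a b, HasDerivWithinAt δ (F (δ t)) (Ici t) t := fun hδ t ht ↦
    (hδ.hasDerivWithinAt (Ico_subset_Icc_self ht)).mono_of_mem_nhdsWithin
      (Icc_mem_nhdsGE_of_mem ht)
  exact ODE_solution_unique_of_mem_Icc_right (v := fun _ ↦ F) (fun _ _ ↦ hk)
    hα.continuousOn (right_deriv hα) (fun t ht ↦ .inl ⟨t, Ico_subset_Icc_self ht, rfl⟩)
    hβ.continuousOn (right_deriv hβ) (fun t ht ↦ .inr ⟨t, Ico_subset_Icc_self ht, rfl⟩) h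

lemma eqOn_Icc_of_eq_right {a b : ℝ} (hα : IsSolOn F Ω (Icc a b) α) (hβ : IsSolOn F Ω (Icc a b) β)
    (h : α b = β b) : EqOn α β (Icc a b) := by
  obtain ⟨k, hk⟩ := exists_lipschitzOnWith_image_union hΩ hF isCompact_Icc hα hβ
  have left_deriv : ∀ {δ : ℝ → ℂ}, IsSolOn F Ω (Icc a b) δ →
      ∀ t ∈ Ioc a b, HasDerivWithinAt δ (F (δ t)) (Iic t) t := fun hδ t ht ↦
    (hδ.hasDerivWithinAt (Ioc_subset_Icc_self ht)).mono_of_mem_nhdsWithin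
      (Icc_mem_nhdsLE_of_mem ht)
  exact ODE_solution_unique_of_mem_Icc_left (v := fun _ ↦ F) (fun _ _ ↦ hk)
    hα.continuousOn (left_deriv hα) (fun t ht ↦ .inl ⟨t, Ioc_subset_Icc_self ht, rfl⟩)
    hβ.continuousOn (left_deriv hβ) (fun t ht ↦ .inr ⟨t, Ioc_subset_Icc_self ht, rfl⟩) h

theorem eqOn_of_ordConnected (hs : s.OrdConnected) (hα : IsSolOn F Ω s α) (hβ : IsSolOn F Ω s β)
    {t₀ : ℝ} (ht₀ : t₀ ∈ s) (h : α t₀ = β t₀) : EqOn α β s := by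
  intro t ht
  rcases le_total t₀ t with hle | hle
  · have hsub := hs.out ht₀ ht
    exact eqOn_Icc_of_eq_left hΩ hF (hα.mono hsub) (hβ.mono hsub) h (right_mem_Icc.2 hle)
  · have hsub := hs.out ht ht₀
    exact eqOn_Icc_of_eq_right hΩ hF (hα.mono hsub) (hβ.mono hsub) h (left_mem_Icc.2 hle)

lemma exists_periodic_of_not_injOn (hγ : IsSolOn F Ω (Ici 0) γ) (hinj : ¬ InjOn γ (Ici 0)) :
    ∃ T > 0, ∀ t ∈ Ici (0 : ℝ), γ (t + T) = γ t := by
  obtain ⟨x, hx, y, hlt, hxy⟩ : ∃ x, 0 ≤ x ∧ ∃ y, x < y ∧ γ x = γ y := by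
    simp only [InjOn, not_forall] at hinj
    obtain ⟨x, hx, y, hy, hxy, hne⟩ := hinj
    rcases lt_or_gt_of_ne hne with h | h
    · exact ⟨x, hx, y, h, hxy⟩
    · exact ⟨y, hy, x, h, hxy.symm⟩
  have hshift : IsSolOn F Ω (Ici 0) fun t ↦ γ (t + (y - x)) :=
    (hγ.comp_add_const (y - x)).mono fun _ (ht : 0 ≤ _) ↦ add_nonneg ht (sub_nonneg.2 hlt.le)
  exact ⟨y - x, sub_pos.2 hlt, eqOn_of_ordConnected hΩ hF ordConnected_Ici hshift hγ (t₀ := x) hx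
    (by simp [hxy])⟩

lemma ne_zero_of_injOn (hγ : IsSolOn F Ω (Ici 0) γ) (hinj : InjOn γ (Ici 0)) {t : ℝ}
    (ht : 0 ≤ t) : F (γ t) ≠ 0 := by
  intro h0
  have hconst : IsSolOn F Ω (Ici 0) fun _ ↦ γ t := fun s _ ↦
    ⟨hγ.mem ht, h0 ▸ hasDerivWithinAt_const s (Ici 0) (γ t)⟩
  have heq := eqOn_of_ordConnected hΩ hF ordConnected_Ici hγ hconst (t₀ := t) ht rfl
  exact zero_ne_one (hinj (mem_Ici.2 le_rfl) (mem_Ici.2 zero_le_one)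
    ((heq (mem_Ici.2 le_rfl)).trans (heq (mem_Ici.2 zero_le_one)).symm))

end Uniqueness

end IsSolOn
/-- A holomorphic chart `ψ` on `W` conjugating the constant field `1` to `F`: in the coordinate
given by `ψ`, the solutions of `ẋ = F(x)` move horizontally with unit speed. -/
structure IsFlowBox (F : ℂ → ℂ) (Ω : Set ℂ) (ψ : ℂ → ℂ) (W : Set ℂ) : Prop where
  isOpen : IsOpen W
  mapsTo : MapsTo ψ W Ω
  injOn : InjOn ψ W
  hasDerivAt : ∀ z ∈ W, HasDerivAt ψ (F (ψ z)) z
  ne_zero : ∀ z ∈ W, F (ψ z) ≠ 0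

lemma exists_isFlowBox {F : ℂ → ℂ} {Ω : Set ℂ} (hΩ : IsOpen Ω) (hF : DifferentiableOn ℂ F Ω)
    {q : ℂ} (hq : q ∈ Ω) (hFq : F q ≠ 0) :
    ∃ r > 0, ∃ ψ : ℂ → ℂ, ψ 0 = q ∧ IsFlowBox F Ω ψ (Metric.ball 0 r) := by
  have hregular : ∀ᶠ z in 𝓝 q, z ∈ Ω ∧ F z ≠ 0 :=
    (eventually_mem_set.2 (hΩ.mem_nhds hq)).and
      ((hF.continuousOn.continuousAt (hΩ.mem_nhds hq)).eventually_ne hFq)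
  obtain ⟨δ, hδ, hball⟩ := Metric.eventually_nhds_iff_ball.1 hregular
  have hinv : DifferentiableOn ℂ (fun z ↦ (F z)⁻¹) (Metric.ball q δ) :=
    (hF.mono fun z hz ↦ (hball z hz).1).inv fun z hz ↦ (hball z hz).2
  obtain ⟨τ, hτq, hτ⟩ := hinv.isExactOn_ball.with_val_at q 0
  have hτ_strict : HasStrictDerivAt τ (F q)⁻¹ q := by
    have hcd : ContDiffAt ℂ 1 τ q :=
      (DifferentiableOn.contDiffOn (fun z hz ↦ (hτ z hz).differentiableAt.differentiableWithinAt)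
        Metric.isOpen_ball).contDiffAt (Metric.ball_mem_nhds q hδ)
    simpa [(hτ q (Metric.mem_ball_self hδ)).deriv] using hcd.hasStrictDerivAt one_ne_zero
  have hequiv := hτ_strict.hasStrictFDerivAt_equiv (inv_ne_zero hFq)
  let e := hequiv.toOpenPartialHomeomorph τ
  have hq_source : q ∈ e.source := hequiv.mem_toOpenPartialHomeomorph_source
  have h0_target : (0 : ℂ) ∈ e.target := hτq ▸ e.map_source hq_source
  have he_symm : e.symm 0 = q := (congrArg e.symm hτq.symm).trans (e.left_inv hq_source)
  have hnhds : ∀ᶠ z in 𝓝 (0 : ℂ), z ∈ e.target ∧ e.symm z ∈ Metric.ball q δ :=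
    (eventually_mem_set.2 (e.open_target.mem_nhds h0_target)).and
      ((e.symm.continuousAt h0_target).preimage_mem_nhds
        (he_symm.symm ▸ Metric.ball_mem_nhds q hδ))
  obtain ⟨r, hr, hr_ball⟩ := Metric.eventually_nhds_iff_ball.1 hnhds
  refine ⟨r, hr, e.symm, he_symm, Metric.isOpen_ball, fun z hz ↦ (hball _ (hr_ball z hz).2).1,
    e.symm.injOn.mono fun z hz ↦ (hr_ball z hz).1, fun z hz ↦ ?_,
    fun z hz ↦ (hball _ (hr_ball z hz).2).2⟩
  obtain ⟨hz_target, hz_ball⟩ := hr_ball z hz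
  simpa using e.hasDerivAt_symm hz_target (inv_ne_zero (hball _ hz_ball).2) (hτ _ hz_ball)

namespace IsFlowBox

variable {F ψ : ℂ → ℂ} {Ω W : Set ℂ}

lemma mono (hψ : IsFlowBox F Ω ψ W) {W' : Set ℂ} (hW' : IsOpen W') (hsub : W' ⊆ W) :
    IsFlowBox F Ω ψ W' where
  isOpen := hW'
  mapsTo := hψ.mapsTo.mono_left hsub
  injOn := hψ.injOn.mono hsub
  hasDerivAt z hz := hψ.hasDerivAt z (hsub hz)
  ne_zero z hz := hψ.ne_zero z (hsub hz)

lemma continuousOn (hψ : IsFlowBox F Ω ψ W) : ContinuousOn ψ W := fun z hz ↦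
  (hψ.hasDerivAt z hz).continuousAt.continuousWithinAt

lemma map_nhds_eq (hψ : IsFlowBox F Ω ψ W) {z : ℂ} (hz : z ∈ W) : map ψ (𝓝 z) = 𝓝 (ψ z) := by
  have hcd : ContDiffAt ℂ 1 ψ z :=
    (DifferentiableOn.contDiffOn (fun w hw ↦ (hψ.hasDerivAt w hw).differentiableAt
      |>.differentiableWithinAt) hψ.isOpen).contDiffAt (hψ.isOpen.mem_nhds hz)
  have hstrict := hcd.hasStrictDerivAt one_ne_zero
  rw [(hψ.hasDerivAt z hz).deriv] at hstrict
  exact hstrict.map_nhds_eq (hψ.ne_zero z hz)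

lemma eq_of_isSolOn (hψ : IsFlowBox F Ω ψ W) (hW : Convex ℝ W) (hΩ : IsOpen Ω)
    (hF : DifferentiableOn ℂ F Ω) {s : Set ℝ} {γ : ℝ → ℂ} (hs : s.OrdConnected)
    (hγ : IsSolOn F Ω s γ) {t₀ t : ℝ} {z : ℂ} (ht₀ : t₀ ∈ s) (ht : t ∈ s) (hz : z ∈ W)
    (hzt : z + (t - t₀) ∈ W) (h : γ t₀ = ψ z) : γ t = ψ (z + (t - t₀)) := by
  let line : ℝ →ᵃ[ℝ] ℂ := AffineMap.lineMap (z - t₀) (z - t₀ + 1)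
  have hline : ∀ t, line t = z + (t - t₀) := fun t ↦ by
    simp only [line, AffineMap.lineMap_apply, vsub_eq_sub, vadd_eq_add, add_sub_cancel_left,
      Complex.real_smul, mul_one]
    ring
  have hsub : (s ∩ line ⁻¹' W).OrdConnected := hs.inter (hW.affine_preimage line).ordConnected
  have hψ_sol : IsSolOn F Ω (s ∩ line ⁻¹' W) fun t ↦ ψ (line t) := fun x hx ↦ by
    have hderiv : HasDerivAt line 1 x := by
      simpa [line] using AffineMap.hasDerivAt_lineMap (a := z - t₀) (b := z - t₀ + 1) (x := x)
    exact ⟨hψ.mapsTo hx.2, by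
      simpa [Function.comp_def] using
        ((hψ.hasDerivAt _ hx.2).scomp x hderiv).hasDerivWithinAt⟩
  rw [← hline]
  exact (hγ.mono inter_subset_left).eqOn_of_ordConnected hΩ hF hsub hψ_sol
    ⟨ht₀, by simpa [hline]⟩ (by simpa [hline]) ⟨ht, by simpa [hline]⟩

end IsFlowBox

section Charts

lemma convex_reProdIm {s t : Set ℝ} (hs : Convex ℝ s) (ht : Convex ℝ t) : Convex ℝ (s ×ℂ t) :=
  (hs.linear_preimage Complex.reLm).inter (ht.linear_preimage Complex.imLm)

lemma exists_reProdIm_Ioo_subset {z : ℂ} {V : Set ℂ} (hV : V ∈ 𝓝 z) :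
    ∃ δ > 0, Ioo (z.re - δ) (z.re + δ) ×ℂ Ioo (z.im - δ) (z.im + δ) ⊆ V := by
  obtain ⟨r, hr, hrV⟩ := Metric.mem_nhds_iff.1 hV
  refine ⟨r / 2, half_pos hr, fun w hw ↦ hrV ?_⟩
  have hre : |w.re - z.re| < r / 2 :=
    abs_sub_lt_iff.2 ⟨by linarith [hw.1.2], by linarith [hw.1.1]⟩
  have him : |w.im - z.im| < r / 2 :=
    abs_sub_lt_iff.2 ⟨by linarith [hw.2.2], by linarith [hw.2.1]⟩
  rw [Metric.mem_ball, dist_eq_norm]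
  refine (Complex.norm_le_abs_re_add_abs_im _).trans_lt ?_
  simpa using add_lt_add hre him

variable {X : Type*} [TopologicalSpace X] {S : Set X}

lemma isTwoSidedAt_of_chart {θ : ℂ → X} {V : Set ℂ} (hV : IsOpen V)
    (hθ : ∀ z ∈ V, map θ (𝓝 z) = 𝓝 (θ z)) (hS : ∀ z ∈ V, θ z ∈ S ↔ z.im = 0) {x : ℝ}
    (hx : (x : ℂ) ∈ V) : IsTwoSidedAt S (θ x) := by
  obtain ⟨δ, hδ, hδV⟩ := exists_reProdIm_Ioo_subset (hV.mem_nhds hx)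
  set side : Set ℝ → Set ℂ := fun J ↦ Ioo (x - δ) (x + δ) ×ℂ J
  replace hδV : side (Ioo (-δ) δ) ⊆ V := by simpa [side] using hδV
  have hside : ∀ J ⊆ Ioo (-δ) δ, side J ⊆ V := fun J hJ ↦
    (inter_subset_inter_right _ (preimage_mono hJ)).trans hδV
  have hpos : side (Ioo 0 δ) ⊆ V := hside _ (Ioo_subset_Ioo_left (by linarith))
  have hneg : side (Ioo (-δ) 0) ⊆ V := hside _ (Ioo_subset_Ioo_right hδ.le)
  have hconn : ∀ J : Set ℝ, Convex ℝ J → side J ⊆ V → IsPreconnected (θ '' side J) := by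
    intro J hJ hJV
    refine (convex_reProdIm (convex_Ioo _ _) hJ).isPreconnected.image _ fun z hz ↦ ?_
    exact ContinuousAt.continuousWithinAt (hθ z (hJV hz)).le
  have hnhds : θ '' side (Ioo (-δ) δ) ∈ 𝓝 (θ x) := by
    rw [← hθ x hx]
    refine image_mem_map ((isOpen_Ioo.reProdIm isOpen_Ioo).mem_nhds ?_)
    simp [Complex.mem_reProdIm, hδ]
  have hclosure : ∀ J : Set ℝ, (0 : ℝ) ∈ closure J → ∀ z ∈ side (Ioo (-δ) δ), z.im = 0 →
      θ z ∈ closure (θ '' side J) := fun J hJ z hz h0 ↦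
    mem_closure_image (hθ z (hδV hz)).le (by
      rw [Complex.closure_reProdIm]
      exact ⟨subset_closure hz.1, by simpa [h0]⟩)
  refine ⟨θ '' side (Ioo 0 δ), θ '' side (Ioo (-δ) 0), hconn _ (convex_Ioo _ _) hpos,
    hconn _ (convex_Ioo _ _) hneg, ?_, ?_, mem_of_superset hnhds ?_, ?_⟩
  · rintro _ ⟨z, hz, rfl⟩ hzS
    exact hz.2.1.ne' ((hS z (hpos hz)).1 hzS)
  · rintro _ ⟨z, hz, rfl⟩ hzS
    exact hz.2.2.ne ((hS z (hneg hz)).1 hzS)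
  · rintro _ ⟨z, hz, rfl⟩
    rcases lt_trichotomy z.im 0 with h | h | h
    · exact .inl (.inr ⟨z, ⟨hz.1, hz.2.1, h⟩, rfl⟩)
    · exact .inr ((hS z (hδV hz)).2 h)
    · exact .inl (.inl ⟨z, ⟨hz.1, h, hz.2.2⟩, rfl⟩)
  · filter_upwards [hnhds]
    rintro _ ⟨z, hz, rfl⟩ hzS
    have h0 := (hS z (hδV hz)).1 hzS
    exact ⟨hclosure _ (by simp [closure_Ioo hδ.ne, hδ.le]) z hz h0,
      hclosure _ (by simp [closure_Ioo (neg_lt_zero.2 hδ).ne, hδ.le]) z hz h0⟩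

/-- The homeomorphism `x + iy ↦ x + i(y + g x)` of the plane, taking the real axis to the graph
of `g`. -/
noncomputable def verticalShear (g : ℝ → ℝ) (hg : Continuous g) : ℂ ≃ₜ ℂ where
  toFun z := z + g z.re * Complex.I
  invFun z := z - g z.re * Complex.I
  left_inv z := by simp
  right_inv z := by simp
  continuous_toFun := by fun_prop
  continuous_invFun := by fun_prop

lemma isTwoSidedAt_of_graph {χ : ℂ → X} {W : Set ℂ} (hW : IsOpen W)
    (hχ : ∀ z ∈ W, map χ (𝓝 z) = 𝓝 (χ z)) {g : ℝ → ℝ} (hg : Continuous g)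
    (hS : ∀ z ∈ W, χ z ∈ S ↔ z.im = g z.re) {z : ℂ} (hz : z ∈ W) (hzS : χ z ∈ S) :
    IsTwoSidedAt S (χ z) := by
  let shear := verticalShear g hg
  have hshear : shear z.re = z := by
    simp [shear, verticalShear, ← (hS z hz).1 hzS]
  have := isTwoSidedAt_of_chart (θ := χ ∘ shear) (S := S) (hW.preimage shear.continuous)
    (fun w hw ↦ by rw [← map_map, shear.map_nhds_eq, hχ _ hw, Function.comp_apply])
    (fun w hw ↦ (hS _ hw).trans (by simp [shear, verticalShear])) (x := z.re) (by simpa [hshear])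
  simpa [hshear] using this

end Charts

namespace IsSolOn

variable {F : ℂ → ℂ} {Ω : Set ℂ} {γ : ℝ → ℂ} {a b t : ℝ}

lemma exists_isFlowBox_mem_image_Icc_iff (hΩ : IsOpen Ω) (hF : DifferentiableOn ℂ F Ω)
    (hγ : IsSolOn F Ω (Icc a b) γ) (hinj : InjOn γ (Icc a b)) (ht : t ∈ Ioo a b)
    (hFt : F (γ t) ≠ 0) :
    ∃ (ψ : ℂ → ℂ) (W : Set ℂ), ψ 0 = γ t ∧ 0 ∈ W ∧ IsFlowBox F Ω ψ W ∧
      ∀ z ∈ W, ψ z ∈ γ '' Icc a b ↔ z.im = 0 := by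
  have ht' := Ioo_subset_Icc_self ht
  obtain ⟨r, hr, ψ, hψ0, hψ⟩ := exists_isFlowBox hΩ hF (hγ.mem ht') hFt
  obtain ⟨δ, hδ, hδ_Ioo⟩ := Metric.isOpen_iff.1 isOpen_Ioo t ht
  have hflow : ∀ x ∈ Icc a b, |x - t| < r → γ x = ψ ((x - t : ℝ) : ℂ) := by
    intro x hx hxr
    have := hψ.eq_of_isSolOn (convex_ball _ _) hΩ hF ordConnected_Icc hγ (z := 0) ht' hx
      (Metric.mem_ball_self hr) (by simpa [← Complex.ofReal_sub] using hxr) hψ0.symm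
    simpa using this
  let far : Set ℂ := γ '' (Icc a b \ Metric.ball t (min δ r))
  have hfar : IsCompact far :=
    (isCompact_Icc.diff Metric.isOpen_ball).image_of_continuousOn
      (hγ.continuousOn.mono sdiff_subset)
  have hfar_t : γ t ∉ far := by
    rintro ⟨x, hx, hxt⟩
    exact hx.2 (hinj hx.1 ht' hxt ▸ Metric.mem_ball_self (lt_min hδ hr))
  have hball : Metric.ball (0 : ℂ) (min δ r) ⊆ Metric.ball 0 r :=
    Metric.ball_subset_ball (min_le_right _ _)
  refine ⟨ψ, Metric.ball 0 (min δ r) ∩ ψ ⁻¹' farᶜ, hψ0,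
    ⟨Metric.mem_ball_self (lt_min hδ hr), by simpa [hψ0]⟩,
    hψ.mono ((hψ.continuousOn.mono hball).isOpen_inter_preimage Metric.isOpen_ball
      hfar.isClosed.isOpen_compl) (inter_subset_left.trans hball), fun z hz ↦ ⟨?_, fun h0 ↦ ?_⟩⟩
  · rintro ⟨x, hx, hxz⟩
    have hxt : x ∈ Metric.ball t (min δ r) := by_contra fun h ↦ hz.2 ⟨x, ⟨hx, h⟩, hxz⟩
    have hxr : |x - t| < r := hxt.trans_le (min_le_right _ _)
    have hzx := hψ.injOn (hball hz.1) (by simpa [← Complex.ofReal_sub] using hxr)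
      (hxz.symm.trans (hflow x hx hxr))
    rw [hzx, Complex.ofReal_im]
  · have hz_real : (z.re : ℂ) = z := Complex.ext rfl h0.symm
    have hz_lt : |z.re| < min δ r := (Complex.abs_re_le_norm z).trans_lt (by simpa using hz.1)
    have hmem : t + z.re ∈ Icc a b := Ioo_subset_Icc_self
      (hδ_Ioo (by simpa using hz_lt.trans_le (min_le_left _ _)))
    refine ⟨t + z.re, hmem, ?_⟩
    rw [hflow _ hmem (by simpa using hz_lt.trans_le (min_le_right _ _)), add_sub_cancel_left,
      hz_real]

lemma isTwoSidedAt_union_image_Icc (hΩ : IsOpen Ω) (hF : DifferentiableOn ℂ F Ω)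
    (hγ : IsSolOn F Ω (Icc a b) γ) (hinj : InjOn γ (Icc a b)) {A : Set ℂ} (hA : IsClosed A)
    (ht : t ∈ Ioo a b) (hFt : F (γ t) ≠ 0) (hAt : γ t ∉ A) :
    IsTwoSidedAt (A ∪ γ '' Icc a b) (γ t) := by
  obtain ⟨ψ, W, hψ0, h0W, hψ, hW⟩ := hγ.exists_isFlowBox_mem_image_Icc_iff hΩ hF hinj ht hFt
  have hopen := hψ.continuousOn.isOpen_inter_preimage hψ.isOpen hA.isOpen_compl
  rw [← hψ0] at hAt ⊢
  exact isTwoSidedAt_of_graph hopen (fun z hz ↦ hψ.map_nhds_eq hz.1) (g := fun _ ↦ 0)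
    continuous_const (fun z hz ↦ (or_iff_right hz.2).trans (hW z hz.1)) ⟨h0W, hAt⟩
    (.inr ((hW 0 h0W).2 rfl))

end IsSolOn

section Arcs

open MeasureTheory

variable {E : Type*} {a b c : ℝ} {f g : ℝ → E}

lemma eqOn_piecewise_Iic_Ici (h : f c = g c) : EqOn ((Iic c).piecewise f g) g (Ici c) := by
  intro t ht
  rcases (mem_Ici.1 ht).eq_or_lt with rfl | hlt
  · simp [h]
  · exact piecewise_eq_of_notMem _ _ _ (notMem_Iic.2 hlt)

lemma piecewise_Iic_eventuallyEq_left {t : ℝ} (h : t < c) : (Iic c).piecewise f g =ᶠ[𝓝 t] f :=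
  (piecewise_eqOn _ _ _).eventuallyEq_of_mem (Iic_mem_nhds h)

lemma piecewise_Iic_eventuallyEq_right {t : ℝ} (h : c < t) : (Iic c).piecewise f g =ᶠ[𝓝 t] g :=
  (piecewise_eqOn_compl _ _ _).eventuallyEq_of_mem (by simpa using Ioi_mem_nhds h)

variable [NormedAddCommGroup E]

lemma continuousAt_piecewise_Iic {t : ℝ} (htc : t ≠ c) (hf : t < c → ContinuousAt f t)
    (hg : c < t → ContinuousAt g t) : ContinuousAt ((Iic c).piecewise f g) t := by
  rcases lt_or_gt_of_ne htc with h | h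
  · exact (hf h).congr (piecewise_Iic_eventuallyEq_left h).symm
  · exact (hg h).congr (piecewise_Iic_eventuallyEq_right h).symm

lemma hasDerivAt_piecewise_Iic [NormedSpace ℝ E] {f' g' : ℝ → E} {t : ℝ} (htc : t ≠ c)
    (hf : t < c → HasDerivAt f (f' t) t) (hg : c < t → HasDerivAt g (g' t) t) :
    HasDerivAt ((Iic c).piecewise f g) ((Iic c).piecewise f' g' t) t := by
  rcases lt_or_gt_of_ne htc with h | h
  · rw [(piecewise_Iic_eventuallyEq_left h).eq_of_nhds]
    exact (hf h).congr_of_eventuallyEq (piecewise_Iic_eventuallyEq_left h)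
  · rw [(piecewise_Iic_eventuallyEq_right h).eq_of_nhds]
    exact (hg h).congr_of_eventuallyEq (piecewise_Iic_eventuallyEq_right h)

lemma continuousOn_piecewise_Iic (hac : a ≤ c) (hcb : c ≤ b) (hf : ContinuousOn f (Icc a c))
    (hg : ContinuousOn g (Icc c b)) (h : f c = g c) :
    ContinuousOn ((Iic c).piecewise f g) (Icc a b) := by
  rw [← Icc_union_Icc_eq_Icc hac hcb]
  exact (hf.congr fun t ht ↦ piecewise_eqOn _ _ _ ht.2).union_of_isClosed
    (hg.congr fun t ht ↦ eqOn_piecewise_Iic_Ici h ht.1) isClosed_Icc isClosed_Icc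

lemma intervalIntegrable_piecewise_Iic (hac : a ≤ c) (hcb : c ≤ b)
    (hf : IntervalIntegrable f volume a c) (hg : IntervalIntegrable g volume c b) :
    IntervalIntegrable ((Iic c).piecewise f g) volume a c ∧
      IntervalIntegrable ((Iic c).piecewise f g) volume c b := by
  refine ⟨hf.congr_uIoo fun t ht ↦ ?_, hg.congr_uIoo fun t ht ↦ ?_⟩
  · rw [uIoo_of_le hac] at ht
    exact (piecewise_eq_of_mem _ _ _ (mem_Iic.2 ht.2.le)).symm
  · rw [uIoo_of_le hcb] at ht
    exact (piecewise_eq_of_notMem _ _ _ (notMem_Iic.2 ht.1)).symm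

lemma integral_piecewise_Iic [NormedSpace ℝ E] (hac : a ≤ c) (hcb : c ≤ b)
    (hf : IntervalIntegrable f volume a c) (hg : IntervalIntegrable g volume c b) :
    ∫ t in a..b, (Iic c).piecewise f g t = (∫ t in a..c, f t) + ∫ t in c..b, g t := by
  have hint := intervalIntegrable_piecewise_Iic hac hcb hf hg
  rw [← intervalIntegral.integral_add_adjacent_intervals hint.1 hint.2]
  congr 1
  · exact intervalIntegral.integral_congr_Ioo_of_le hac fun t ht ↦
      piecewise_eq_of_mem _ _ _ (mem_Iic.2 ht.2.le)
  · exact intervalIntegral.integral_congr_Ioo_of_le hcb fun t ht ↦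
      piecewise_eq_of_notMem _ _ _ (notMem_Iic.2 ht.1)

variable {α α' β β' : ℝ → ℂ}

theorem exists_piecewiseC1Loop_of_arcs (hac : a ≤ c) (hcb : c ≤ b)
    (hα : ContinuousOn α (Icc a c)) (hα' : ContinuousOn α' (Icc a c))
    (hαα' : ∀ t ∈ Ioo a c, HasDerivAt α (α' t) t)
    (hβ : ContinuousOn β (Icc c b)) (hβ' : ContinuousOn β' (Icc c b))
    (hββ' : ∀ t ∈ Ioo c b, HasDerivAt β (β' t) t) (hc : α c = β c) (hab : β b = α a) :
    ∃ L : PiecewiseC1Loop, L.image = α '' Icc a c ∪ β '' Icc c b ∧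
      ∀ f, ContinuousOn f L.image →
        L.integral f = (∫ t in a..c, α' t * f (α t)) + ∫ t in c..b, β' t * f (β t) := by
  have hvel := intervalIntegrable_piecewise_Iic hac hcb (hα'.intervalIntegrable_of_Icc hac)
    (hβ'.intervalIntegrable_of_Icc hcb)
  have hleft : EqOn ((Iic c).piecewise α β) α (Iic c) := piecewise_eqOn _ _ _
  have hright : EqOn ((Iic c).piecewise α β) β (Ici c) := eqOn_piecewise_Iic_Ici hc
  let L : PiecewiseC1Loop :=
    { a, b
      a_le_b := hac.trans hcb
      toFun := (Iic c).piecewise α β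
      vel := (Iic c).piecewise α' β'
      exc := {c}
      countable_exc := countable_singleton c
      continuousOn_toFun := continuousOn_piecewise_Iic hac hcb hα hβ hc
      closed := (hright hcb).trans (hab.trans (hleft hac).symm)
      intervalIntegrable_vel := hvel.1.trans hvel.2
      hasDerivAt := fun t ht ↦ hasDerivAt_piecewise_Iic ht.2
        (fun h ↦ hαα' t ⟨ht.1.1, h⟩) fun h ↦ hββ' t ⟨h, ht.1.2⟩
      continuousAt_vel := fun t ht ↦ continuousAt_piecewise_Iic ht.2
        (fun h ↦ hα'.continuousAt (Icc_mem_nhds ht.1.1 h))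
        fun h ↦ hβ'.continuousAt (Icc_mem_nhds h ht.1.2) }
  have himage : L.image = α '' Icc a c ∪ β '' Icc c b := by
    rw [PiecewiseC1Loop.image, ← Icc_union_Icc_eq_Icc hac hcb, image_union,
      (hleft.mono Icc_subset_Iic_self).image_eq, (hright.mono Icc_subset_Ici_self).image_eq]
  refine ⟨L, himage, fun f hf ↦ ?_⟩
  rw [himage] at hf
  have hα_int : ContinuousOn (fun t ↦ α' t * f (α t)) (Icc a c) :=
    hα'.mul (hf.comp hα fun t ht ↦ .inl ⟨t, ht, rfl⟩)
  have hβ_int : ContinuousOn (fun t ↦ β' t * f (β t)) (Icc c b) :=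
    hβ'.mul (hf.comp hβ fun t ht ↦ .inr ⟨t, ht, rfl⟩)
  rw [← integral_piecewise_Iic hac hcb (hα_int.intervalIntegrable_of_Icc hac)
    (hβ_int.intervalIntegrable_of_Icc hcb)]
  refine intervalIntegral.integral_congr fun t _ ↦ ?_
  by_cases ht : t ≤ c <;> simp [L, ht]

end Arcs

/-- At time `t ≥ 0` the orbit `γ` meets the transversal `ψ '' {iy : |y| < ε}` of the flow box `ψ`,
at height `y`. -/
def IsCrossing (γ : ℝ → ℂ) (ψ : ℂ → ℂ) (ε t y : ℝ) : Prop :=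
  0 ≤ t ∧ y ∈ Ioo (-ε) ε ∧ γ t = ψ (y * Complex.I)

section Crossings

open Complex

variable {F ψ : ℂ → ℂ} {Ω : Set ℂ} {γ : ℝ → ℂ} {R ε t t' y y' : ℝ} {z : ℂ}

lemma IsCrossing.height_unique (hψ : IsFlowBox F Ω ψ (Ioo (-R) R ×ℂ Ioo (-ε) ε)) (hR : 0 < R)
    (h : IsCrossing γ ψ ε t y) (h' : IsCrossing γ ψ ε t y') : y = y' := by
  have := congrArg im (hψ.injOn (x₁ := y * I) (x₂ := y' * I)
    ⟨by simpa using hR, by simpa using h.2.1⟩ ⟨by simpa using hR, by simpa using h'.2.1⟩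
    (h.2.2.symm.trans h'.2.2))
  simpa using this

section FlowBox

variable (hΩ : IsOpen Ω) (hF : DifferentiableOn ℂ F Ω) (hγ : IsSolOn F Ω (Ici 0) γ)
  (hψ : IsFlowBox F Ω ψ (Ioo (-R) R ×ℂ Ioo (-ε) ε))
include hΩ hF hγ hψ

lemma IsCrossing.apply_add (h : IsCrossing γ ψ ε t y) {x : ℝ} (hx : |x| < R) (htx : 0 ≤ t + x) :
    γ (t + x) = ψ (x + y * I) := by
  have hR : 0 < R := (abs_nonneg x).trans_lt hx
  have := hψ.eq_of_isSolOn (convex_reProdIm (convex_Ioo _ _) (convex_Ioo _ _)) hΩ hF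
    ordConnected_Ici hγ (t := t + x) h.1 htx ⟨by simpa using hR, by simpa using h.2.1⟩
    ⟨by simpa using abs_lt.1 hx, by simpa using h.2.1⟩ h.2.2
  simpa [add_comm] using this

lemma isCrossing_of_apply_eq (ht : R ≤ t) (hz : z ∈ Ioo (-R) R ×ℂ Ioo (-ε) ε) (h : γ t = ψ z) :
    IsCrossing γ ψ ε (t - z.re) z.im := by
  have ht_sub : 0 ≤ t - z.re := by linarith [hz.1.2]
  have hz_add : z + ((t - z.re : ℝ) - t) = z.im * I := by
    apply Complex.ext <;> simp
  have hR : 0 < R := by linarith [hz.1.1, hz.1.2]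
  refine ⟨ht_sub, hz.2, ?_⟩
  rw [← hz_add]
  refine hψ.eq_of_isSolOn (convex_reProdIm (convex_Ioo _ _) (convex_Ioo _ _)) hΩ hF
    ordConnected_Ici hγ (hR.le.trans ht) ht_sub hz ?_ h
  rw [hz_add]
  exact ⟨by simpa using hR, by simpa using hz.2⟩

lemma IsCrossing.add_two_mul_le (h : IsCrossing γ ψ ε t y) (h' : IsCrossing γ ψ ε t' y')
    (hlt : t < t') : t + 2 * R ≤ t' := by
  by_contra! hclose
  obtain ⟨d, hd, rfl⟩ : ∃ d > 0, t' = t + 2 * d := ⟨(t' - t) / 2, by linarith, by ring⟩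
  have hdR : |d| < R := by rw [abs_of_pos hd]; linarith
  have hmid : ψ (d + y * I) = ψ ((-d : ℝ) + y' * I) := by
    rw [← h.apply_add hΩ hF hγ hψ hdR (by linarith [h.1]),
      ← h'.apply_add hΩ hF hγ hψ (by rwa [abs_neg]) (by linarith [h.1])]
    ring_nf
  have hd' := abs_lt.1 hdR
  have := congrArg re (hψ.injOn (x₁ := d + y * I) (x₂ := (-d : ℝ) + y' * I)
    ⟨by simpa using hd', by simpa using h.2.1⟩
    ⟨by simpa [and_comm, neg_lt] using hd', by simpa using h'.2.1⟩ hmid)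
  simp only [add_re, ofReal_re, re_ofReal_mul, I_re, mul_zero, add_zero] at this
  linarith

lemma frequently_exists_isCrossing (hz : z ∈ Ioo (-R) R ×ℂ Ioo (-ε) ε)
    (hcluster : MapClusterPt (ψ z) atTop γ) : ∃ᶠ t in atTop, ∃ y, IsCrossing γ ψ ε t y := by
  have hnhds : ψ '' (Ioo (-R) R ×ℂ Ioo (-ε) ε) ∈ 𝓝 (ψ z) := by
    rw [← hψ.map_nhds_eq hz]
    exact image_mem_map (hψ.isOpen.mem_nhds hz)
  refine frequently_atTop.2 fun N ↦ ?_
  obtain ⟨t, ht, w, hw, hwt⟩ := frequently_atTop.1 (hcluster.frequently hnhds) (max N 0 + R)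
  have htR : R ≤ t := by linarith [le_max_right N 0]
  exact ⟨t - w.re, by linarith [hw.1.2, le_max_left N 0], w.im,
    isCrossing_of_apply_eq hΩ hF hγ hψ htR hw hwt.symm⟩

end FlowBox

/-- `t₀ < t₁` are consecutive crossing times of the orbit `γ` with the transversal of the flow box
`ψ`, at heights `y₀` and `y₁`. -/
structure IsFirstReturn (γ : ℝ → ℂ) (ψ : ℂ → ℂ) (ε t₀ t₁ y₀ y₁ : ℝ) : Prop where
  lt : t₀ < t₁
  left : IsCrossing γ ψ ε t₀ y₀
  right : IsCrossing γ ψ ε t₁ y₁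
  not_isCrossing : ∀ t ∈ Ioo t₀ t₁, ∀ y, ¬ IsCrossing γ ψ ε t y

lemma exists_isFirstReturn (hR : 0 < R)
    (hgap : ∀ {t t' y y'}, IsCrossing γ ψ ε t y → IsCrossing γ ψ ε t' y' → t < t' → t + R ≤ t')
    (hfreq : ∃ᶠ t in atTop, ∃ y, IsCrossing γ ψ ε t y) (N : ℝ) :
    ∃ t₀ t₁ y₀ y₁, N ≤ t₀ ∧ IsFirstReturn γ ψ ε t₀ t₁ y₀ y₁ := by
  obtain ⟨t₀, hN, y₀, h₀⟩ := frequently_atTop.1 hfreq N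
  let later : Set ℝ := {t | t₀ < t ∧ ∃ y, IsCrossing γ ψ ε t y}
  have hbdd : BddBelow later := ⟨t₀, fun t ht ↦ ht.1.le⟩
  have hne : later.Nonempty := by
    obtain ⟨t, ht, hcross⟩ := frequently_atTop'.1 hfreq t₀
    exact ⟨t, ht, hcross⟩
  obtain ⟨t₁, ⟨hlt, y₁, h₁⟩, hinf⟩ :=
    exists_lt_of_csInf_lt hne (lt_add_of_pos_right (sInf later) hR)
  refine ⟨t₀, t₁, y₀, y₁, hN, hlt, h₀, h₁, fun t ht y h ↦ ?_⟩
  linarith [csInf_le hbdd ⟨ht.1, y, h⟩, hgap h h₁ ht.2]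

end Crossings

/-- The continuous function equal to `y₁` on `(-∞, 0]`, to `y₀` on `[ρ, ∞)`, and affine on `[0, ρ]`.
Its graph over `[0, ρ]` is the slanted segment that closes up the orbit. -/
noncomputable def slant (ρ y₀ y₁ x : ℝ) : ℝ := y₁ + (y₀ - y₁) / ρ * max 0 (min x ρ)

section Slant

variable {ρ y₀ y₁ x : ℝ}

lemma continuous_slant : Continuous (slant ρ y₀ y₁) := by
  unfold slant
  fun_prop

lemma slant_of_nonpos (hx : x ≤ 0) : slant ρ y₀ y₁ x = y₁ := by
  simp [slant, max_eq_left ((min_le_left _ _).trans hx)]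

lemma slant_of_ge (hρ : 0 < ρ) (hx : ρ ≤ x) : slant ρ y₀ y₁ x = y₀ := by
  simp [slant, min_eq_right hx, max_eq_right hρ.le, hρ.ne']

lemma slant_of_mem_Icc (hx : x ∈ Icc 0 ρ) : slant ρ y₀ y₁ x = y₁ + (y₀ - y₁) / ρ * x := by
  simp [slant, min_eq_left hx.2, max_eq_right hx.1]

lemma slant_mem_of_convex (hρ : 0 < ρ) {J : Set ℝ} (hJ : Convex ℝ J) (h₀ : y₀ ∈ J) (h₁ : y₁ ∈ J) :
    slant ρ y₀ y₁ x ∈ J := by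
  convert hJ.add_smul_sub_mem h₁ h₀ (t := max 0 (min x ρ) / ρ)
    ⟨by positivity, div_le_one_of_le₀ (max_le hρ.le (min_le_right _ _)) hρ.le⟩ using 1
  rw [slant, smul_eq_mul]
  ring

end Slant

/-- The path with unit horizontal speed tracing the graph of `slant ρ y₀ y₁` over `[0, ρ]` during
the time interval `[t₀, t₀ + ρ]`. -/
noncomputable def slantedPath (ρ y₀ y₁ t₀ t : ℝ) : ℂ :=
  y₁ * Complex.I + (t - t₀ : ℝ) * (1 + ((y₀ - y₁) / ρ : ℝ) * Complex.I)

section SlantedPath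

open Complex

variable {ρ y₀ y₁ t₀ t : ℝ} {z : ℂ}

lemma slantedPath_re : (slantedPath ρ y₀ y₁ t₀ t).re = t - t₀ := by
  simp [slantedPath]

lemma slantedPath_im (ht : t ∈ Icc t₀ (t₀ + ρ)) :
    (slantedPath ρ y₀ y₁ t₀ t).im = slant ρ y₀ y₁ (t - t₀) := by
  rw [slant_of_mem_Icc ⟨by linarith [ht.1], by linarith [ht.2]⟩]
  simp [slantedPath, mul_comm]

lemma mem_image_slantedPath_iff :
    z ∈ slantedPath ρ y₀ y₁ t₀ '' Icc t₀ (t₀ + ρ) ↔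
      z.re ∈ Icc 0 ρ ∧ z.im = slant ρ y₀ y₁ z.re := by
  constructor
  · rintro ⟨t, ht, rfl⟩
    rw [slantedPath_re, slantedPath_im ht]
    exact ⟨⟨by linarith [ht.1], by linarith [ht.2]⟩, rfl⟩
  · rintro ⟨hre, him⟩
    have ht : t₀ + z.re ∈ Icc t₀ (t₀ + ρ) := ⟨by linarith [hre.1], by linarith [hre.2]⟩
    exact ⟨t₀ + z.re, ht, Complex.ext (by simp [slantedPath_re]) (by simp [slantedPath_im ht, him])⟩

lemma slantedPath_mem_reProdIm (hρ : 0 < ρ) {R : ℝ} (hρR : ρ < R) {J : Set ℝ} (hJ : Convex ℝ J)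
    (h₀ : y₀ ∈ J) (h₁ : y₁ ∈ J) (ht : t ∈ Icc t₀ (t₀ + ρ)) :
    slantedPath ρ y₀ y₁ t₀ t ∈ Ioo (-R) R ×ℂ J := by
  rw [mem_reProdIm, slantedPath_re, slantedPath_im ht]
  exact ⟨⟨by linarith [ht.1], by linarith [ht.2]⟩, slant_mem_of_convex hρ hJ h₀ h₁⟩

lemma slantedPath_left : slantedPath ρ y₀ y₁ t₀ t₀ = y₁ * I := by
  simp [slantedPath]

lemma slantedPath_right (hρ : ρ ≠ 0) : slantedPath ρ y₀ y₁ t₀ (t₀ + ρ) = ρ + y₀ * I := by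
  apply Complex.ext <;> simp [slantedPath, mul_div_cancel₀ _ hρ]

lemma hasDerivAt_slantedPath :
    HasDerivAt (slantedPath ρ y₀ y₁ t₀) (1 + ((y₀ - y₁) / ρ : ℝ) * I) t := by
  have := ((hasDerivAt_id t).sub_const t₀).ofReal_comp.mul_const (1 + ((y₀ - y₁) / ρ : ℝ) * I)
  exact (this.const_add (y₁ * I)).congr_deriv (by simp)

end SlantedPath

/-- The closed curve formed by the orbit between the times `t₀ + ρ` and `t₁` and by the image of
the slanted path under the flow box `ψ`. -/
def returnCurve (γ : ℝ → ℂ) (ψ : ℂ → ℂ) (ρ t₀ t₁ y₀ y₁ : ℝ) : Set ℂ :=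
  (ψ ∘ slantedPath ρ y₀ y₁ t₀) '' Icc t₀ (t₀ + ρ) ∪ γ '' Icc (t₀ + ρ) t₁

namespace IsFirstReturn

open Complex

variable {F ψ : ℂ → ℂ} {Ω : Set ℂ} {γ : ℝ → ℂ} {R ρ ε t t₀ t₁ y₀ y₁ : ℝ} {z : ℂ}

lemma slantedPath_mem (h : IsFirstReturn γ ψ ε t₀ t₁ y₀ y₁) (hρ : 0 < ρ) (hρR : ρ < R)
    (ht : t ∈ Icc t₀ (t₀ + ρ)) : slantedPath ρ y₀ y₁ t₀ t ∈ Ioo (-R) R ×ℂ Ioo (-ε) ε :=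
  slantedPath_mem_reProdIm hρ hρR (convex_Ioo _ _) h.left.2.1 h.right.2.1 ht

lemma hasDerivAt_comp_slantedPath (h : IsFirstReturn γ ψ ε t₀ t₁ y₀ y₁)
    (hψ : IsFlowBox F Ω ψ (Ioo (-R) R ×ℂ Ioo (-ε) ε)) (hρ : 0 < ρ) (hρR : ρ < R)
    (ht : t ∈ Icc t₀ (t₀ + ρ)) :
    HasDerivAt (ψ ∘ slantedPath ρ y₀ y₁ t₀)
      (F (ψ (slantedPath ρ y₀ y₁ t₀ t)) * (1 + ((y₀ - y₁) / ρ : ℝ) * I)) t :=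
  (hψ.hasDerivAt _ (h.slantedPath_mem hρ hρR ht)).comp t hasDerivAt_slantedPath

lemma continuousOn_comp_slantedPath (h : IsFirstReturn γ ψ ε t₀ t₁ y₀ y₁)
    (hψ : IsFlowBox F Ω ψ (Ioo (-R) R ×ℂ Ioo (-ε) ε)) (hρ : 0 < ρ) (hρR : ρ < R) :
    ContinuousOn (ψ ∘ slantedPath ρ y₀ y₁ t₀) (Icc t₀ (t₀ + ρ)) := fun _ ht ↦
  (h.hasDerivAt_comp_slantedPath hψ hρ hρR ht).continuousAt.continuousWithinAt

lemma integral_comp_slantedPath (h : IsFirstReturn γ ψ ε t₀ t₁ y₀ y₁)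
    (hψ : IsFlowBox F Ω ψ (Ioo (-R) R ×ℂ Ioo (-ε) ε)) (hρ : 0 < ρ) (hρR : ρ < R) :
    ∫ t in t₀..t₀ + ρ, F (ψ (slantedPath ρ y₀ y₁ t₀ t)) * (1 + ((y₀ - y₁) / ρ : ℝ) * I) *
      (F ((ψ ∘ slantedPath ρ y₀ y₁ t₀) t))⁻¹ = ρ + (y₀ - y₁ : ℝ) * I := by
  have hκ : EqOn (fun t ↦ F (ψ (slantedPath ρ y₀ y₁ t₀ t)) * (1 + ((y₀ - y₁) / ρ : ℝ) * I) *
      (F ((ψ ∘ slantedPath ρ y₀ y₁ t₀) t))⁻¹) (fun _ ↦ 1 + ((y₀ - y₁) / ρ : ℝ) * I)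
      (uIcc t₀ (t₀ + ρ)) := fun t ht ↦ by
    rw [uIcc_of_le (by linarith)] at ht
    have := hψ.ne_zero _ (h.slantedPath_mem hρ hρR ht)
    simp only [Function.comp_apply]
    field_simp
  rw [intervalIntegral.integral_congr hκ, intervalIntegral.integral_const]
  apply Complex.ext <;> simp [mul_div_cancel₀ _ hρ.ne']

lemma apply_right (h : IsFirstReturn γ ψ ε t₀ t₁ y₀ y₁) :
    γ t₁ = ψ (slantedPath ρ y₀ y₁ t₀ t₀) := by
  rw [slantedPath_left, h.right.2.2]

variable (hΩ : IsOpen Ω) (hF : DifferentiableOn ℂ F Ω) (hγ : IsSolOn F Ω (Ici 0) γ)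
  (hψ : IsFlowBox F Ω ψ (Ioo (-R) R ×ℂ Ioo (-ε) ε)) (h : IsFirstReturn γ ψ ε t₀ t₁ y₀ y₁)
include hΩ hF hγ hψ h

lemma eq_or_eq_of_apply_eq (ht₀ : R ≤ t₀) (ht : t ∈ Icc t₀ t₁)
    (hz : z ∈ Ioo (-R) R ×ℂ Ioo (-ε) ε) (hzt : γ t = ψ z) :
    z.im = y₀ ∧ t = t₀ + z.re ∨ z.im = y₁ ∧ t = t₁ + z.re := by
  have hR : 0 < R := by linarith [hz.1.1, hz.1.2]
  have hcross := isCrossing_of_apply_eq hΩ hF hγ hψ (ht₀.trans ht.1) hz hzt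
  have hgap {s s' x x'} (hs : IsCrossing γ ψ ε s x) (hs' : IsCrossing γ ψ ε s' x') (hlt : s < s') :=
    hs.add_two_mul_le hΩ hF hγ hψ hs' hlt
  rcases lt_trichotomy (t - z.re) t₀ with hlt | heq | hgt
  · linarith [hgap hcross h.left hlt, hz.1.2, ht.1]
  · exact .inl ⟨(heq ▸ hcross).height_unique hψ hR h.left, by linarith⟩
  rcases lt_trichotomy (t - z.re) t₁ with hlt | heq | hgt'
  · exact absurd hcross (h.not_isCrossing _ ⟨hgt, hlt⟩ _)
  · exact .inr ⟨(heq ▸ hcross).height_unique hψ hR h.right, by linarith⟩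
  · linarith [hgap h.right hcross hgt', hz.1.1, ht.2]

lemma mem_image_Icc_iff (ht₀ : R ≤ t₀) (hρ : 0 < ρ) (hρR : ρ < R)
    (hz : z ∈ Ioo (-R) R ×ℂ Ioo (-ε) ε) :
    ψ z ∈ γ '' Icc (t₀ + ρ) t₁ ↔ z.re ≤ 0 ∧ z.im = y₁ ∨ ρ ≤ z.re ∧ z.im = y₀ := by
  have hgap := h.left.add_two_mul_le hΩ hF hγ hψ h.right h.lt
  constructor
  · rintro ⟨t, ht, htz⟩
    rcases h.eq_or_eq_of_apply_eq hΩ hF hγ hψ ht₀ ⟨by linarith [ht.1], ht.2⟩ hz htz with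
      ⟨him, rfl⟩ | ⟨him, rfl⟩
    · exact .inr ⟨by linarith [ht.1], him⟩
    · exact .inl ⟨by linarith [ht.2], him⟩
  · rintro (⟨hre, him⟩ | ⟨hre, him⟩)
    · refine ⟨t₁ + z.re, ⟨by linarith [hz.1.1], by linarith⟩, ?_⟩
      rw [h.right.apply_add hΩ hF hγ hψ (abs_lt.2 hz.1) (by linarith [hz.1.1]), ← him, re_add_im]
    · refine ⟨t₀ + z.re, ⟨by linarith, by linarith [hz.1.2]⟩, ?_⟩
      rw [h.left.apply_add hΩ hF hγ hψ (abs_lt.2 hz.1) (by linarith), ← him, re_add_im]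

lemma apply_left_add (hρ : 0 < ρ) (hρR : ρ < R) :
    γ (t₀ + ρ) = ψ (slantedPath ρ y₀ y₁ t₀ (t₀ + ρ)) := by
  rw [slantedPath_right hρ.ne', h.left.apply_add hΩ hF hγ hψ (by rwa [abs_of_pos hρ])
    (add_nonneg h.left.1 hρ.le)]

lemma mem_returnCurve_iff (ht₀ : R ≤ t₀) (hρ : 0 < ρ) (hρR : ρ < R)
    (hz : z ∈ Ioo (-R) R ×ℂ Ioo (-ε) ε) :
    ψ z ∈ returnCurve γ ψ ρ t₀ t₁ y₀ y₁ ↔ z.im = slant ρ y₀ y₁ z.re := by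
  have hpath : slantedPath ρ y₀ y₁ t₀ '' Icc t₀ (t₀ + ρ) ⊆ Ioo (-R) R ×ℂ Ioo (-ε) ε :=
    image_subset_iff.2 fun t ↦ h.slantedPath_mem hρ hρR
  rw [returnCurve, mem_union, image_comp, hψ.injOn.mem_image_iff hpath hz,
    mem_image_slantedPath_iff, h.mem_image_Icc_iff hΩ hF hγ hψ ht₀ hρ hρR hz]
  constructor
  · rintro (⟨-, him⟩ | ⟨hre, him⟩ | ⟨hre, him⟩)
    · exact him
    · rw [him, slant_of_nonpos hre]
    · rw [him, slant_of_ge hρ hre]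
  · intro him
    rcases le_total z.re 0 with h0 | h0
    · exact .inr (.inl ⟨h0, him.trans (slant_of_nonpos h0)⟩)
    rcases le_total ρ z.re with hle | hle
    · exact .inr (.inr ⟨hle, him.trans (slant_of_ge hρ hle)⟩)
    · exact .inl ⟨⟨h0, hle⟩, him⟩

lemma isTwoSidedAt_returnCurve (ht₀ : R ≤ t₀) (hρ : 0 < ρ) (hρR : ρ < R) (hinj : InjOn γ (Ici 0))
    {p : ℂ} (hp : p ∈ returnCurve γ ψ ρ t₀ t₁ y₀ y₁) :
    IsTwoSidedAt (returnCurve γ ψ ρ t₀ t₁ y₀ y₁) p := by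
  by_cases hp_box : p ∈ ψ '' (Ioo (-R) R ×ℂ Ioo (-ε) ε)
  · obtain ⟨z, hz, rfl⟩ := hp_box
    exact isTwoSidedAt_of_graph hψ.isOpen (fun w ↦ hψ.map_nhds_eq) continuous_slant
      (fun w ↦ h.mem_returnCurve_iff hΩ hF hγ hψ ht₀ hρ hρR) hz hp
  have hp_arc : p ∉ (ψ ∘ slantedPath ρ y₀ y₁ t₀) '' Icc t₀ (t₀ + ρ) := by
    rintro ⟨t, ht, rfl⟩
    exact hp_box ⟨_, h.slantedPath_mem hρ hρR ht, rfl⟩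
  obtain ⟨t, ht, rfl⟩ := hp.resolve_left hp_arc
  have hleft : t₀ + ρ ≠ t := by
    rintro rfl
    exact hp_arc ⟨_, right_mem_Icc.2 (by linarith), (h.apply_left_add hΩ hF hγ hψ hρ hρR).symm⟩
  have hright : t ≠ t₁ := by
    rintro rfl
    exact hp_arc ⟨_, left_mem_Icc.2 (by linarith), h.apply_right.symm⟩
  have hsub : Icc (t₀ + ρ) t₁ ⊆ Ici 0 := fun s hs ↦ mem_Ici.2 (by linarith [hs.1, h.left.1])
  have harc_closed : IsClosed ((ψ ∘ slantedPath ρ y₀ y₁ t₀) '' Icc t₀ (t₀ + ρ)) :=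
    (isCompact_Icc.image_of_continuousOn (h.continuousOn_comp_slantedPath hψ hρ hρR)).isClosed
  exact (hγ.mono hsub).isTwoSidedAt_union_image_Icc hΩ hF (hinj.mono hsub) harc_closed
    ⟨lt_of_le_of_ne ht.1 hleft, lt_of_le_of_ne ht.2 hright⟩
    (hγ.ne_zero_of_injOn hΩ hF hinj (hsub ht)) hp_arc

lemma returnCurve_subset (hρ : 0 < ρ) (hρR : ρ < R) (hinj : InjOn γ (Ici 0)) :
    returnCurve γ ψ ρ t₀ t₁ y₀ y₁ ⊆
      (ψ '' (Ioo (-R) R ×ℂ Ioo (-ε) ε) ∪ γ '' Ici 0) ∩ {z ∈ Ω | F z ≠ 0} := by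
  rintro _ (⟨t, ht, rfl⟩ | ⟨t, ht, rfl⟩)
  · have hmem := h.slantedPath_mem hρ hρR ht
    exact ⟨.inl ⟨_, hmem, rfl⟩, hψ.mapsTo hmem, hψ.ne_zero _ hmem⟩
  · have ht' : t ∈ Ici 0 := mem_Ici.2 (by linarith [ht.1, h.left.1])
    exact ⟨.inr ⟨t, ht', rfl⟩, hγ.mem ht', hγ.ne_zero_of_injOn hΩ hF hinj ht'⟩

lemma exists_piecewiseC1Loop (hρ : 0 < ρ) (hρR : ρ < R) (hinj : InjOn γ (Ici 0)) :
    ∃ L : PiecewiseC1Loop, L.image = returnCurve γ ψ ρ t₀ t₁ y₀ y₁ ∧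
      L.integral (fun z ↦ (F z)⁻¹) = (t₁ - t₀ : ℝ) + (y₀ - y₁ : ℝ) * I := by
  have hgap := h.left.add_two_mul_le hΩ hF hγ hψ h.right h.lt
  have hsub : Icc (t₀ + ρ) t₁ ⊆ Ici 0 := fun s hs ↦ mem_Ici.2 (by linarith [hs.1, h.left.1])
  have harc := h.continuousOn_comp_slantedPath hψ hρ hρR
  have horbit := hγ.continuousOn.mono hsub
  have harc_mem : ∀ t ∈ Icc t₀ (t₀ + ρ), ψ (slantedPath ρ y₀ y₁ t₀ t) ∈ Ω := fun t ht ↦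
    hψ.mapsTo (h.slantedPath_mem hρ hρR ht)
  obtain ⟨L, hL, hint⟩ := exists_piecewiseC1Loop_of_arcs (β' := fun t ↦ F (γ t))
    (α' := fun t ↦ F (ψ (slantedPath ρ y₀ y₁ t₀ t)) * (1 + ((y₀ - y₁) / ρ : ℝ) * I))
    (by linarith) (by linarith) harc
    ((hF.continuousOn.comp harc harc_mem).mul continuousOn_const)
    (fun t ht ↦ h.hasDerivAt_comp_slantedPath hψ hρ hρR (Ioo_subset_Icc_self ht))
    horbit (hF.continuousOn.comp horbit fun t ht ↦ hγ.mem (hsub ht))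
    (fun t ht ↦ (hγ.hasDerivWithinAt (hsub (Ioo_subset_Icc_self ht))).hasDerivAt
      (Ici_mem_nhds (by linarith [ht.1, h.left.1])))
    (h.apply_left_add hΩ hF hγ hψ hρ hρR).symm h.apply_right
  have hF_inv : ContinuousOn (fun z ↦ (F z)⁻¹) L.image := by
    have hmem := hL.trans_subset (h.returnCurve_subset hΩ hF hγ hψ hρ hρR hinj)
    exact (hF.continuousOn.mono fun z hz ↦ (hmem hz).2.1).inv₀ fun z hz ↦ (hmem hz).2.2
  have horbit_int : ∫ t in t₀ + ρ..t₁, F (γ t) * (F (γ t))⁻¹ = t₁ - (t₀ + ρ) := by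
    rw [intervalIntegral.integral_congr (g := fun _ ↦ (1 : ℂ)), intervalIntegral.integral_const]
    · simp
    · intro t ht
      rw [uIcc_of_le (by linarith)] at ht
      exact mul_inv_cancel₀ (hγ.ne_zero_of_injOn hΩ hF hinj (hsub ht))
  refine ⟨L, hL, (hint _ hF_inv).trans ?_⟩
  rw [h.integral_comp_slantedPath hψ hρ hρR, horbit_int]
  push_cast
  ring

end IsFirstReturn

section Convergence

variable {X : Type*} [PseudoMetricSpace X] {u : ℝ → X} {t₀ : ℝ} {a : X}

lemma frequently_dist_eq_of_mapClusterPt (hu : ContinuousOn u (Ici t₀))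
    (ha : MapClusterPt a atTop u) {ε : ℝ} (hε : 0 < ε) (hfar : ∃ᶠ t in atTop, ε ≤ dist (u t) a) :
    ∃ᶠ t in atTop, dist (u t) a = ε := by
  refine frequently_atTop.2 fun N ↦ ?_
  obtain ⟨t₁, ht₁, hfar₁⟩ := frequently_atTop.1 hfar (max N t₀)
  obtain ⟨t₂, ht₂, hnear₂⟩ :=
    frequently_atTop.1 (ha.frequently (Metric.ball_mem_nhds a hε)) t₁
  have hdist : ContinuousOn (fun t ↦ dist (u t) a) (Icc t₁ t₂) :=
    (continuous_id.dist continuous_const).comp_continuousOn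
      (hu.mono fun t ht ↦ ((le_max_right _ _).trans ht₁).trans ht.1)
  obtain ⟨t, ht, hteq⟩ := intermediate_value_Icc' ht₂ hdist ⟨(Metric.mem_ball.1 hnear₂).le, hfar₁⟩
  exact ⟨t, (le_max_left _ _).trans (ht₁.trans ht.1), hteq⟩

lemma tendsto_of_mapClusterPt_of_eventually_not_mapClusterPt {K : Set X} (hK : IsCompact K)
    (huK : ∀ᶠ t in atTop, u t ∈ K) (hu : ContinuousOn u (Ici t₀)) (ha : MapClusterPt a atTop u)
    (hiso : ∀ᶠ b in 𝓝[≠] a, ¬ MapClusterPt b atTop u) : Tendsto u atTop (𝓝 a) := by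
  obtain ⟨r, hr, hball⟩ := Metric.eventually_nhds_iff.1 (eventually_nhdsWithin_iff.1 hiso)
  refine Metric.tendsto_nhds.2 fun ε hε ↦ ?_
  by_contra hnot
  have hδ : 0 < min ε (r / 2) := lt_min hε (half_pos hr)
  have hsphere : ∃ᶠ t in atTop, u t ∈ K ∩ Metric.sphere a (min ε (r / 2)) :=
    ((frequently_dist_eq_of_mapClusterPt hu ha hδ ((not_eventually.1 hnot).mono fun t ht ↦
      (min_le_left _ _).trans (not_lt.1 ht))).and_eventually huK).mono fun t ht ↦ ⟨ht.2, ht.1⟩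
  obtain ⟨b, ⟨-, hb⟩, hb_cluster⟩ :=
    (hK.inter_right Metric.isClosed_sphere).exists_mapClusterPt_of_frequently hsphere
  have hba : b ≠ a := by
    rintro rfl
    exact hδ.ne (by simpa using hb)
  exact hball (hb.trans_lt ((min_le_right _ _).trans_lt (half_lt_self hr))) hba hb_cluster

end Convergence

lemma eventually_ne_zero_of_isPreconnected {F : ℂ → ℂ} {Ω S : Set ℂ} (hΩ : IsOpen Ω)
    (hF : DifferentiableOn ℂ F Ω) (hS : IsPreconnected S) (hSΩ : S ⊆ Ω)
    (hne : ∃ z ∈ S, F z ≠ 0) {w : ℂ} (hw : w ∈ S) : ∀ᶠ z in 𝓝[≠] w, F z ≠ 0 := by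
  by_contra hfreq
  obtain ⟨z, hz, hFz⟩ := hne
  exact hFz (((hF.analyticOnNhd hΩ).mono hSΩ).eqOn_zero_of_preconnected_of_frequently_eq_zero hS hw
    (by simpa using hfreq) hz)

lemma Ioo_reProdIm_Ioo_subset_closedBall {a b : ℝ} :
    Ioo (-a) a ×ℂ Ioo (-b) b ⊆ Metric.closedBall 0 (a + b) := fun z hz ↦ by
  rw [mem_closedBall_zero_iff]
  exact (Complex.norm_le_abs_re_add_abs_im z).trans
    (add_le_add (abs_lt.2 hz.1).le (abs_lt.2 hz.2).le)

namespace IsSolOn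

variable {F ψ : ℂ → ℂ} {Ω K : Set ℂ} {γ : ℝ → ℂ} {R ε ε₀ : ℝ} {q : ℂ}
  (hΩ : IsOpen Ω) (hF : DifferentiableOn ℂ F Ω) (hγ : IsSolOn F Ω (Ici 0) γ)
include hΩ hF hγ

lemma not_injOn_of_im_integral_eq_zero (hR : 0 < R) (hε : 0 < ε) (hεε₀ : 2 * ε ≤ ε₀)
    (hψ : IsFlowBox F Ω ψ (Ioo (-R) R ×ℂ Ioo (-ε) ε))
    (hperiod : ∀ L : PiecewiseC1Loop,
      L.image ⊆ (ψ '' (Ioo (-R) R ×ℂ Ioo (-ε) ε) ∪ γ '' Ici 0) ∩ {z ∈ Ω | F z ≠ 0} →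
      (∀ p ∈ L.image, IsTwoSidedAt L.image p) →
      |(L.integral fun z ↦ (F z)⁻¹).im| < ε₀ → (L.integral fun z ↦ (F z)⁻¹).im = 0)
    (hcluster : MapClusterPt (ψ 0) atTop γ) : ¬ InjOn γ (Ici 0) := by
  intro hinj
  have hfreq := frequently_exists_isCrossing hΩ hF hγ hψ (z := 0)
    (by simp [Complex.mem_reProdIm, *]) hcluster
  have hgap {t t' y y'} (h : IsCrossing γ ψ ε t y) (h' : IsCrossing γ ψ ε t' y') (hlt : t < t') :
      t + R ≤ t' := by linarith [h.add_two_mul_le hΩ hF hγ hψ h' hlt]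
  obtain ⟨t₀, t₁, y₀, y₁, ht₀, h⟩ := exists_isFirstReturn hR hgap hfreq R
  have hρ : 0 < R / 2 := half_pos hR
  have hρR : R / 2 < R := half_lt_self hR
  obtain ⟨L, hL_image, hL_integral⟩ := h.exists_piecewiseC1Loop hΩ hF hγ hψ hρ hρR hinj
  have him : (L.integral fun z ↦ (F z)⁻¹).im = y₀ - y₁ := by simp [hL_integral]
  have hsmall : |y₀ - y₁| < ε₀ := by
    obtain ⟨-, ⟨hy₀, hy₀'⟩, -⟩ := h.left
    obtain ⟨-, ⟨hy₁, hy₁'⟩, -⟩ := h.right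
    rw [abs_lt]
    constructor <;> linarith
  have hheight : y₀ - y₁ = 0 := by
    rw [← him]
    refine hperiod L ?_ ?_ (him ▸ hsmall) <;> rw [hL_image]
    · exact h.returnCurve_subset hΩ hF hγ hψ hρ hρR hinj
    · exact fun p hp ↦ h.isTwoSidedAt_returnCurve hΩ hF hγ hψ ht₀ hρ hρR hinj hp
  exact h.lt.ne (hinj h.left.1 h.right.1
    (by rw [h.left.2.2, h.right.2.2, sub_eq_zero.1 hheight]))

theorem eq_zero_of_mapClusterPt (hinj : InjOn γ (Ici 0)) (hK : IsCompact K)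
    (hγK : γ '' Ici 0 ⊆ K) (hKΩ : K ⊆ Ω) (hiso : ∀ w ∈ K, ∀ᶠ z in 𝓝[≠] w, F z ≠ 0)
    (hq : q ∈ Ω) (hcluster : MapClusterPt q atTop γ) : F q = 0 := by
  by_contra hFq
  obtain ⟨r, hr, ψ, rfl, hψ⟩ := exists_isFlowBox hΩ hF hq hFq
  let C := K ∪ ψ '' Metric.closedBall 0 (r / 2)
  let U := {z ∈ Ω | F z ≠ 0}
  have hball : Metric.closedBall (0 : ℂ) (r / 2) ⊆ Metric.ball 0 r :=
    Metric.closedBall_subset_ball (half_lt_self hr)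
  have hC : IsCompact C :=
    hK.union ((isCompact_closedBall _ _).image_of_continuousOn (hψ.continuousOn.mono hball))
  have hU : IsOpen U := hF.continuousOn.isOpen_inter_preimage hΩ isOpen_compl_singleton
  have hCU : ∀ w ∈ C \ U, ∀ᶠ z in 𝓝[≠] w, z ∈ U := by
    rintro w ⟨hwK | ⟨z, hz, rfl⟩, hwU⟩
    · filter_upwards [hiso w hwK, nhdsWithin_le_nhds (hΩ.mem_nhds (hKΩ hwK))] with z hz hzΩ
      exact ⟨hzΩ, hz⟩
    · exact absurd ⟨hψ.mapsTo (hball hz), hψ.ne_zero z (hball hz)⟩ hwU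
  obtain ⟨ε₀, hε₀, hperiod⟩ := exists_pos_forall_im_integral_eq_zero hC hU hCU
    ((hF.mono (sep_subset _ _)).inv fun z hz ↦ hz.2)
  let ε := min (r / 4) (ε₀ / 2)
  have hbox : Ioo (-(r / 4)) (r / 4) ×ℂ Ioo (-ε) ε ⊆ Metric.closedBall 0 (r / 2) :=
    Ioo_reProdIm_Ioo_subset_closedBall.trans
      (Metric.closedBall_subset_closedBall (by linarith [min_le_left (r / 4) (ε₀ / 2)]))
  refine hγ.not_injOn_of_im_integral_eq_zero hΩ hF (R := r / 4) (ε := ε) (ε₀ := ε₀) (by positivity)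
    (by positivity) (by linarith [min_le_right (r / 4) (ε₀ / 2)])
    (hψ.mono (isOpen_Ioo.reProdIm isOpen_Ioo) (hbox.trans hball))
    (fun L hL ↦ hperiod L (hL.trans (inter_subset_inter_left _ ?_))) hcluster hinj
  exact union_subset ((image_mono hbox).trans subset_union_right) (hγK.trans subset_union_left)

end IsSolOn

theorem stmt_15_general {F : ℂ → ℂ} {Ω K : Set ℂ} {γ : ℝ → ℂ} (hΩ : IsOpen Ω)
    (hF : DifferentiableOn ℂ F Ω) (hK : IsCompact K) (hKΩ : K ⊆ Ω) (hγ : IsSolOn F Ω (Ici 0) γ)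
    (hγK : ∀ t ∈ Ici (0 : ℝ), γ t ∈ K) :
    (∃ T > 0, ∀ t ∈ Ici (0 : ℝ), γ (t + T) = γ t) ∨
    (∃ a ∈ Ω, F a = 0 ∧ Tendsto γ atTop (𝓝 a)) := by
  by_cases hinj : InjOn γ (Ici 0)
  swap
  · exact .inl (hγ.exists_periodic_of_not_injOn hΩ hF hinj)
  right
  let S := closure (γ '' Ici 0)
  have hγS : γ '' Ici 0 ⊆ S := subset_closure
  have hSK : S ⊆ K := hK.isClosed.closure_subset_iff.2 (image_subset_iff.2 hγK)
  have hS : IsCompact S := hK.of_isClosed_subset isClosed_closure hSK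
  have hS_conn : IsPreconnected S := (isPreconnected_Ici.image γ hγ.continuousOn).closure
  have hiso : ∀ w ∈ S, ∀ᶠ z in 𝓝[≠] w, F z ≠ 0 := fun w ↦
    eventually_ne_zero_of_isPreconnected hΩ hF hS_conn (hSK.trans hKΩ)
      ⟨γ 0, hγS ⟨0, self_mem_Ici, rfl⟩, hγ.ne_zero_of_injOn hΩ hF hinj le_rfl⟩
  have hcluster_zero : ∀ q ∈ Ω, MapClusterPt q atTop γ → F q = 0 := fun q ↦
    hγ.eq_zero_of_mapClusterPt hΩ hF hinj hS hγS (hSK.trans hKΩ) hiso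
  have hγ_mem : ∀ᶠ t in atTop, γ t ∈ S :=
    (eventually_ge_atTop 0).mono fun t ht ↦ hγS ⟨t, ht, rfl⟩
  obtain ⟨a, ha, ha_cluster⟩ := hS.exists_mapClusterPt_of_frequently hγ_mem.frequently
  have haΩ := hKΩ (hSK ha)
  refine ⟨a, haΩ, hcluster_zero a haΩ ha_cluster,
    tendsto_of_mapClusterPt_of_eventually_not_mapClusterPt hS hγ_mem hγ.continuousOn ha_cluster ?_⟩
  filter_upwards [hiso a ha, nhdsWithin_le_nhds (hΩ.mem_nhds haΩ)] with b hb hbΩ hb_cluster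
  exact hb (hcluster_zero b hbΩ hb_cluster)

/-- Poincaré–Bendixson for holomorphic flows: if `Ω ⊆ ℂ` is open and simply
connected, `F` holomorphic on `Ω` with `F ≢ 0`, `K ⊆ Ω` compact and `γ : [0,∞) → K` a
solution of `ẋ = F(x)`, then either the orbit is periodic, or `γ` tends to a single
equilibrium `a ∈ Ω`. -/
theorem stmt_15 (Ω : Set ℂ) (hΩ : IsOpen Ω) (hsc : SimplyConnectedSpace Ω)
    (F : ℂ → ℂ) (hF : DifferentiableOn ℂ F Ω) (hF0 : ∃ z ∈ Ω, F z ≠ 0)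
    (K : Set ℂ) (hK : IsCompact K) (hKΩ : K ⊆ Ω)
    (γ : ℝ → ℂ) (hγ : IsSolOn F Ω (Ici 0) γ) (hγK : ∀ t ∈ Ici (0 : ℝ), γ t ∈ K) :
    (∃ T > 0, ∀ t ∈ Ici (0 : ℝ), γ (t + T) = γ t) ∨
    (∃ a ∈ Ω, F a = 0 ∧ Tendsto γ atTop (nhds a)) :=
  stmt_15_general hΩ hF hK hKΩ hγ hγK
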